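/- arXiv:1302.3961 — 3 statements merged into one kernel-verified Lean document; each statement's English description precedes it below -/
import Mathlib

section
/- Let n ≥ 1 and let Ω ⊊ ℝⁿ be a nonempty open set with d(x) := dist(x, ℝⁿ∖Ω), satisfying −Δd ≥ 0 in the sense of distributions on Ω (i.e. ∫_Ω d Δφ dx ≤ 0 for every nonnegative φ ∈ C_c^∞(Ω)) and having finite inner radius R := sup_{x ∈ Ω} d(x) < ∞. Then for every s ≥ 1, every γ > 1, and every u ∈ C_c^∞(Ω), one has ∫_Ω |∇u| / d^{s−1} dx ≥ (s−1) · ∫_Ω |u| / d^s dx + ((γ−1)/R^{s−1}) · ∫_Ω (|u| / d) · X^γ(d/R) dx. -/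
open MeasureTheory Metric Set

/-- The (pointwise) Laplacian of a function on Euclidean space,
as the sum of its repeated directional derivatives along the coordinate directions. -/
noncomputable def lapl {n : ℕ} (φ : EuclideanSpace ℝ (Fin n) → ℝ)
    (x : EuclideanSpace ℝ (Fin n)) : ℝ :=
  ∑ i : Fin n,
    fderiv ℝ (fun y => fderiv ℝ φ y (EuclideanSpace.single i (1 : ℝ))) x
      (EuclideanSpace.single i (1 : ℝ))

open Filter Topology NNReal
open scoped Convolution

theorem aux_lineDeriv_conv {n : ℕ} {ψ η : EuclideanSpace ℝ (Fin n) → ℝ} {C : ℝ≥0}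
    (hψ : LipschitzWith C ψ) (hψc : HasCompactSupport ψ)
    (hη : ContDiff ℝ (⊤ : ℕ∞) η) (hηc : HasCompactSupport η)
    (x v : EuclideanSpace ℝ (Fin n)) :
    lineDeriv ℝ (η ⋆[ContinuousLinearMap.lsmul ℝ ℝ, volume] ψ) x v
      = (η ⋆[ContinuousLinearMap.lsmul ℝ ℝ, volume] (fun y => lineDeriv ℝ ψ y v)) x := by
  have hsm : ContDiff ℝ (⊤ : ℕ∞) (η ⋆[ContinuousLinearMap.lsmul ℝ ℝ, volume] ψ) :=
    hηc.contDiff_convolution_left _ hη hψ.continuous.locallyIntegrable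
  have h1 := ((hsm.differentiable (by simp)).differentiableAt (x := x)).lineDifferentiableAt (v := v)
    |>.hasLineDerivAt.tendsto_slope_zero_right
  have h2 := LipschitzWith.integral_inv_smul_sub_mul_tendsto_integral_lineDeriv_mul' (μ := volume)
    hψ hψc (g := fun y => η (x - y)) (hη.continuous.comp (by fun_prop)) v
  have h3 : (η ⋆[ContinuousLinearMap.lsmul ℝ ℝ, volume] (fun y => lineDeriv ℝ ψ y v)) x
      = ∫ y, lineDeriv ℝ ψ y v * η (x - y) := by
    rw [convolution_lsmul_swap]; simp [mul_comm]
  rw [h3]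
  refine tendsto_nhds_unique h1 (h2.congr fun t => ?_)
  have e1 : ∀ w, (η ⋆[ContinuousLinearMap.lsmul ℝ ℝ, volume] ψ) (x + w)
      = ∫ y, η (x - y) * ψ (y + w) := by
    intro w
    rw [convolution_lsmul_swap, ← integral_add_right_eq_self _ w]
    simp
  have i1 : ∀ w, Integrable (fun y => η (x - y) * ψ (y + w)) volume := by
    intro w
    have : Continuous (fun y => η (x - y) * ψ (y + w)) :=
      (hη.continuous.comp (by fun_prop)).mul (hψ.continuous.comp (by fun_prop))
    refine this.integrable_of_hasCompactSupport ?_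
    exact (hψc.comp_homeomorph (Homeomorph.addRight w)).mul_left
  have e0 := e1 0
  have i0 := i1 0
  simp only [add_zero] at e0 i0
  rw [e1, e0, ← integral_sub (i1 _) i0, ← integral_smul]
  refine integral_congr_ae (.of_forall fun y => ?_)
  simp only [smul_eq_mul]; ring

theorem aux_smooth {n : ℕ} {Ω : Set (EuclideanSpace ℝ (Fin n))}
    {d : EuclideanSpace ℝ (Fin n) → ℝ} {Cd : ℝ≥0} (hd : LipschitzWith Cd d)
    (hd0 : ∀ x ∉ Ω, d x = 0)
    {φ : EuclideanSpace ℝ (Fin n) → ℝ} (hφ : ContDiff ℝ (⊤ : ℕ∞) φ) (hc : HasCompactSupport φ)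
    (h : (∫ x in Ω, d x * lapl φ x) ≤ 0) :
    0 ≤ ∫ x, ∑ i : Fin n, lineDeriv ℝ d x (EuclideanSpace.single i (1 : ℝ)) *
      lineDeriv ℝ φ x (EuclideanSpace.single i (1 : ℝ)) := by
  rw [setIntegral_eq_integral_of_forall_compl_eq_zero (fun x hx => by rw [hd0 x hx, zero_mul])] at h
  have hdf : ∀ v, ContDiff ℝ (⊤ : ℕ∞) (fun y => fderiv ℝ φ y v) := fun v =>
    (hφ.fderiv_right (m := (⊤ : ℕ∞)) (by simp)).clm_apply contDiff_const
  have hcf : ∀ v, HasCompactSupport (fun y => fderiv ℝ φ y v) := fun v => hc.fderiv_apply ℝ v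
  have hddf : ∀ v, Continuous (fun x => fderiv ℝ (fun y => fderiv ℝ φ y v) x v) := fun v =>
    ((hdf v).continuous_fderiv (by simp)).clm_apply continuous_const
  have hld : ∀ x v, lineDeriv ℝ φ x v = fderiv ℝ φ x v := fun x v =>
    ((hφ.differentiable (by simp)).differentiableAt).lineDeriv_eq_fderiv
  have key : ∀ v, ∫ x, lineDeriv ℝ d x v * fderiv ℝ φ x v
      = - ∫ x, d x * fderiv ℝ (fun y => fderiv ℝ φ y v) x v := by
    intro v
    obtain ⟨D, hD⟩ := ContDiff.lipschitzWith_of_hasCompactSupport (hcf v) (hdf v) (by simp)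
    rw [LipschitzWith.integral_lineDeriv_mul_eq hd hD (hcf v), ← integral_neg]
    refine integral_congr_ae (.of_forall fun y => ?_)
    simp only [(((hdf v).differentiable (by simp)).differentiableAt).lineDeriv_eq_fderiv, map_neg]
    ring
  simp only [hld]
  rw [integral_finsetSum]
  · simp only [key, Finset.sum_neg_distrib]
    rw [← integral_finsetSum]
    · simpa [lapl, Finset.mul_sum] using h
    · intro i _
      exact (hd.continuous.mul (hddf _)).integrable_of_hasCompactSupport
        (((hcf _).fderiv_apply ℝ _).mul_left)
  · intro i _
    refine Integrable.bdd_mul (c := Cd * ‖(EuclideanSpace.single i (1 : ℝ) : EuclideanSpace ℝ (Fin n))‖)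
      ((hdf _).continuous.integrable_of_hasCompactSupport (hcf _)) ?_ ?_
    · exact (measurable_lineDeriv hd.continuous).aestronglyMeasurable
    · exact .of_forall fun x => norm_lineDeriv_le_of_lipschitz ℝ hd

theorem aux_lip {n : ℕ} {Ω : Set (EuclideanSpace ℝ (Fin n))} (hΩ : IsOpen Ω)
    {d : EuclideanSpace ℝ (Fin n) → ℝ} {Cd : ℝ≥0} (hd : LipschitzWith Cd d)
    (hd0 : ∀ x ∉ Ω, d x = 0)
    (hsub : ∀ φ : EuclideanSpace ℝ (Fin n) → ℝ, ContDiff ℝ (⊤ : ℕ∞) φ →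
      HasCompactSupport φ → tsupport φ ⊆ Ω → (∀ z, 0 ≤ φ z) →
      (∫ x in Ω, d x * lapl φ x) ≤ 0)
    {ψ : EuclideanSpace ℝ (Fin n) → ℝ} {C : ℝ≥0} (hψ : LipschitzWith C ψ)
    (hψc : HasCompactSupport ψ) (hψs : tsupport ψ ⊆ Ω) (hψ0 : ∀ z, 0 ≤ ψ z) :
    0 ≤ ∫ x, ∑ i : Fin n, lineDeriv ℝ d x (EuclideanSpace.single i (1 : ℝ)) *
      lineDeriv ℝ ψ x (EuclideanSpace.single i (1 : ℝ)) := by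
  obtain ⟨δ, hδ, hδs⟩ := hψc.isCompact.exists_cthickening_subset_open hΩ hψs
  have hrpos : ∀ k : ℕ, 0 < δ / (2 * ((k : ℝ) + 1)) := fun k => by positivity
  let b : ℕ → ContDiffBump (0 : EuclideanSpace ℝ (Fin n)) := fun k =>
    ⟨δ / (2 * ((k : ℝ) + 1)), 2 * (δ / (2 * ((k : ℝ) + 1))), hrpos k, by linarith [hrpos k]⟩
  have hb : ∀ k, (b k).rOut ≤ δ := by
    intro k
    change 2 * (δ / (2 * ((k : ℝ) + 1))) ≤ δ
    have : 2 * (δ / (2 * ((k : ℝ) + 1))) = δ / ((k : ℝ) + 1) := by field_simp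
    rw [this]
    exact div_le_self hδ.le (by linarith [(Nat.cast_nonneg k : (0:ℝ) ≤ k)])
  have hbt : Tendsto (fun k => (b k).rOut) atTop (𝓝 0) := by
    have : (fun k => (b k).rOut) = fun k : ℕ => δ * (1 / ((k : ℝ) + 1)) := by
      ext k
      change 2 * (δ / (2 * ((k : ℝ) + 1))) = _
      field_simp
    rw [this]
    simpa using (tendsto_one_div_add_atTop_nhds_zero_nat (𝕜 := ℝ)).const_mul δ
  let f : ℕ → EuclideanSpace ℝ (Fin n) → ℝ := fun k =>
    ((b k).normed volume) ⋆[ContinuousLinearMap.lsmul ℝ ℝ, volume] ψ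
  have hηsm : ∀ k, ContDiff ℝ (⊤ : ℕ∞) ((b k).normed volume) := fun k => (b k).contDiff_normed
  have hfsm : ∀ k, ContDiff ℝ (⊤ : ℕ∞) (f k) := fun k =>
    ((b k).hasCompactSupport_normed).contDiff_convolution_left _ (hηsm k)
      hψ.continuous.locallyIntegrable
  have hfsub : ∀ k, tsupport (f k) ⊆ cthickening δ (tsupport ψ) := by
    intro k
    refine closure_minimal ?_ isClosed_cthickening
    refine (support_convolution_subset _).trans ?_
    rintro z ⟨p, hp, q, hq, rfl⟩
    rw [(b k).support_normed_eq] at hp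
    refine mem_cthickening_of_dist_le _ q _ _ (subset_tsupport _ hq) ?_
    have : dist (p + q) q = ‖p‖ := by simp [dist_eq_norm]
    simp only [this]
    exact (mem_ball_zero_iff.1 hp).le.trans (hb k)
  have hfc : ∀ k, HasCompactSupport (f k) := fun k =>
    (hψc.isCompact.cthickening).of_isClosed_subset (isClosed_tsupport _) (hfsub k)
  have hf0 : ∀ k z, 0 ≤ f k z := fun k z => by
    simp only [f, convolution_lsmul]
    exact integral_nonneg fun t => mul_nonneg ((b k).nonneg_normed _) (hψ0 _)
  have hpos : ∀ k, 0 ≤ ∫ x, ∑ i : Fin n, lineDeriv ℝ d x (EuclideanSpace.single i (1 : ℝ)) *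
      lineDeriv ℝ (f k) x (EuclideanSpace.single i (1 : ℝ)) := fun k =>
    aux_smooth hd hd0 (hfsm k) (hfc k)
      (hsub _ (hfsm k) (hfc k) ((hfsub k).trans hδs) (hf0 k))
  have hline : ∀ k x v, lineDeriv ℝ (f k) x v =
      (((b k).normed volume) ⋆[ContinuousLinearMap.lsmul ℝ ℝ, volume]
        (fun y => lineDeriv ℝ ψ y v)) x := fun k x v =>
    aux_lineDeriv_conv hψ hψc (hηsm k) (b k).hasCompactSupport_normed x v
  have hbound : ∀ k x v, ‖lineDeriv ℝ (f k) x v‖ ≤ C * ‖v‖ := by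
    intro k x v
    rw [hline, convolution_lsmul]
    have : C * ‖v‖ = ∫ t, (b k).normed volume t * (C * ‖v‖) := by
      rw [integral_mul_const, (b k).integral_normed, one_mul]
    rw [this]
    refine norm_integral_le_of_norm_le ((b k).integrable_normed.mul_const _) (.of_forall fun t => ?_)
    rw [norm_smul, Real.norm_of_nonneg ((b k).nonneg_normed _)]
    exact mul_le_mul_of_nonneg_left (norm_lineDeriv_le_of_lipschitz ℝ hψ) ((b k).nonneg_normed _)
  have hzero : ∀ k x v, x ∉ cthickening δ (tsupport ψ) → lineDeriv ℝ (f k) x v = 0 := by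
    intro k x v hx
    have hx' : x ∉ tsupport (f k) := fun h => hx (hfsub k h)
    rw [((hfsm k).differentiable (by simp)).differentiableAt.lineDeriv_eq_fderiv,
      fderiv_of_notMem_tsupport (𝕜 := ℝ) hx']
    simp
  refine ge_of_tendsto' (tendsto_integral_of_dominated_convergence
    (F := fun k x => ∑ i : Fin n, lineDeriv ℝ d x (EuclideanSpace.single i (1 : ℝ)) *
      lineDeriv ℝ (f k) x (EuclideanSpace.single i (1 : ℝ)))
    ((cthickening δ (tsupport ψ)).indicator fun _ => ∑ i : Fin n,
      (Cd * ‖(EuclideanSpace.single i (1 : ℝ) : EuclideanSpace ℝ (Fin n))‖) *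
      (C * ‖(EuclideanSpace.single i (1 : ℝ) : EuclideanSpace ℝ (Fin n))‖)) ?_ ?_ ?_ ?_) hpos
  · intro k
    refine Measurable.aestronglyMeasurable (Finset.measurable_sum _ fun i _ => ?_)
    exact (measurable_lineDeriv hd.continuous).mul (measurable_lineDeriv (hfsm k).continuous)
  · rw [integrable_indicator_iff isClosed_cthickening.measurableSet]
    exact integrableOn_const (hψc.isCompact.cthickening.measure_lt_top.ne)
  · intro k
    refine .of_forall fun x => ?_
    by_cases hx : x ∈ cthickening δ (tsupport ψ)
    · rw [indicator_of_mem hx]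
      refine norm_sum_le_of_le _ fun i _ => ?_
      rw [norm_mul]
      exact mul_le_mul (norm_lineDeriv_le_of_lipschitz ℝ hd) (hbound _ _ _) (norm_nonneg _)
        (by positivity)
    · rw [indicator_of_notMem hx]
      simp [hzero k x _ hx]
  · have : ∀ i : Fin n, ∀ᵐ x, Tendsto (fun k => lineDeriv ℝ (f k) x (EuclideanSpace.single i (1 : ℝ)))
        atTop (𝓝 (lineDeriv ℝ ψ x (EuclideanSpace.single i (1 : ℝ)))) := by
      intro i
      simp only [hline]
      refine ContDiffBump.ae_convolution_tendsto_right_of_locallyIntegrable (K := 2) hbt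
        (.of_forall fun k => le_rfl) ?_
      exact hψ.locallyIntegrable_lineDeriv _
    filter_upwards [ae_all_iff.2 this] with x hx
    exact tendsto_finsetSum _ fun i _ => (hx i).const_mul _

theorem aux_dist_grad {n : ℕ} {Ω : Set (EuclideanSpace ℝ (Fin n))} (hΩ : IsOpen Ω)
    (hne : Ωᶜ.Nonempty) {x : EuclideanSpace ℝ (Fin n)} (hx : x ∈ Ω)
    (hd : DifferentiableAt ℝ (fun x => infDist x Ωᶜ) x) :
    ∃ w : EuclideanSpace ℝ (Fin n), ‖w‖ = 1 ∧ 1 ≤ fderiv ℝ (fun x => infDist x Ωᶜ) x w := by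
  obtain ⟨y, hy, hxy⟩ := hΩ.isClosed_compl.exists_infDist_eq_dist hne x
  have hne' : x ≠ y := fun h => hy (h ▸ hx)
  have hr : 0 < ‖x - y‖ := norm_pos_iff.2 (sub_ne_zero.2 hne')
  refine ⟨‖x - y‖⁻¹ • (x - y), ?_, ?_⟩
  · rw [norm_smul, norm_inv, norm_norm, inv_mul_cancel₀ hr.ne']
  have h1 := (hd.lineDifferentiableAt (v := -(‖x - y‖⁻¹ • (x - y)))).hasLineDerivAt.tendsto_slope_zero_right
  rw [hd.lineDeriv_eq_fderiv, map_neg] at h1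
  have h2 : - fderiv ℝ (fun x => infDist x Ωᶜ) x (‖x - y‖⁻¹ • (x - y)) ≤ -1 := by
    refine le_of_tendsto h1 ?_
    filter_upwards [Ioo_mem_nhdsGT hr] with t ht
    have ht0 : 0 < t := ht.1
    have h3 : infDist (x + t • -(‖x - y‖⁻¹ • (x - y))) Ωᶜ ≤ ‖x - y‖ - t := by
      refine (infDist_le_dist_of_mem hy).trans ?_
      rw [dist_eq_norm]
      have : x + t • -(‖x - y‖⁻¹ • (x - y)) - y = (1 - t * ‖x - y‖⁻¹) • (x - y) := by
        module
      rw [this, norm_smul, Real.norm_of_nonneg]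
      · field_simp; exact le_rfl
      · have := ht.2
        rw [sub_nonneg, ← div_eq_mul_inv, div_le_one hr]; exact this.le
    rw [hxy, dist_eq_norm, smul_eq_mul, inv_mul_le_iff₀ ht0]
    linarith
  linarith

theorem aux_pair {n : ℕ} (D U : EuclideanSpace ℝ (Fin n) →L[ℝ] ℝ)
    (hD : ‖D‖ ≤ 1) (hw : ∃ w : EuclideanSpace ℝ (Fin n), ‖w‖ = 1 ∧ 1 ≤ D w) :
    1 ≤ ∑ i : Fin n, D (EuclideanSpace.single i (1 : ℝ)) * D (EuclideanSpace.single i (1 : ℝ)) ∧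
    |∑ i : Fin n, D (EuclideanSpace.single i (1 : ℝ)) * U (EuclideanSpace.single i (1 : ℝ))|
      ≤ ‖U‖ := by
  let v : EuclideanSpace ℝ (Fin n) := (InnerProductSpace.toDual ℝ _).symm D
  have hv : ∀ z, D z = inner ℝ v z := fun z => by
    simp [v, InnerProductSpace.toDual_symm_apply]
  have hvi : ∀ i, D (EuclideanSpace.single i (1 : ℝ)) = v i := fun i => by
    rw [hv]; simp [EuclideanSpace.inner_single_right]
  have hvn : ‖v‖ ≤ 1 := by simpa [v] using hD
  have hsum : ∀ T : EuclideanSpace ℝ (Fin n) →L[ℝ] ℝ,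
      ∑ i : Fin n, D (EuclideanSpace.single i (1 : ℝ)) * T (EuclideanSpace.single i (1 : ℝ)) = T v := by
    intro T
    have : v = ∑ i, v i • EuclideanSpace.single i (1 : ℝ) := by
      ext j; simp [Finset.sum_apply, Pi.single_apply]
    conv_rhs => rw [this]
    simp [map_sum, hvi]
  obtain ⟨w, hw1, hw2⟩ := hw
  constructor
  · rw [hsum, hv, real_inner_self_eq_norm_sq]
    have : D w ≤ ‖v‖ * ‖w‖ := by rw [hv]; exact real_inner_le_norm _ _
    rw [hw1, mul_one] at this
    nlinarith
  · rw [hsum]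
    refine (U.le_opNorm v).trans ?_
    exact mul_le_of_le_one_right (norm_nonneg _) hvn

/-- Pointwise inequality and integral inequality for a general profile. -/
theorem aux_main {n : ℕ} {Ω : Set (EuclideanSpace ℝ (Fin n))} (hΩo : IsOpen Ω)
    (hne : Ωᶜ.Nonempty)
    (hsub : ∀ φ : EuclideanSpace ℝ (Fin n) → ℝ, ContDiff ℝ (⊤ : ℕ∞) φ →
      HasCompactSupport φ → tsupport φ ⊆ Ω → (∀ z, 0 ≤ φ z) →
      (∫ x in Ω, Metric.infDist x Ωᶜ * lapl φ x) ≤ 0)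
    {R : ℝ} (hR : ∀ x, infDist x Ωᶜ ≤ R)
    {g g' : ℝ → ℝ} (hg : ∀ t, 0 < t → t ≤ R → HasDerivAt g (g' t) t)
    (hg'c : ContinuousOn g' (Ioc 0 R)) (hg0 : ∀ t, 0 < t → t ≤ R → 0 ≤ g t)
    (hg'0 : ∀ t, 0 < t → t ≤ R → g' t ≤ 0)
    {u : EuclideanSpace ℝ (Fin n) → ℝ} (hu : ContDiff ℝ (⊤ : ℕ∞) u)
    (huc : HasCompactSupport u) (hus : tsupport u ⊆ Ω) :
    0 ≤ ∫ x in Ω, (g (infDist x Ωᶜ) * ‖fderiv ℝ u x‖ + g' (infDist x Ωᶜ) * |u x|) := by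
  set d : EuclideanSpace ℝ (Fin n) → ℝ := fun x => infDist x Ωᶜ with hd
  have hdlip : LipschitzWith 1 d := lipschitz_infDist_pt _
  have hdpos : ∀ x ∈ Ω, 0 < d x := fun x hx =>
    (hΩo.isClosed_compl.notMem_iff_infDist_pos hne).1 (by simpa using hx)
  have hd0 : ∀ x ∉ Ω, d x = 0 := fun x hx => infDist_zero_of_mem hx
  have hK : IsCompact (tsupport u) := huc
  obtain ⟨δ, hδ, hδK⟩ : ∃ δ, 0 < δ ∧ ∀ x ∈ tsupport u, δ < d x := by
    rcases (tsupport u).eq_empty_or_nonempty with h | h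
    · exact ⟨1, one_pos, by simp [h]⟩
    · obtain ⟨x0, hx0, hm⟩ := hK.exists_isMinOn h hdlip.continuous.continuousOn
      refine ⟨d x0 / 2, by linarith [hdpos x0 (hus hx0)], fun x hx => ?_⟩
      have h1 : d x0 ≤ d x := hm hx
      linarith [hdpos x0 (hus hx0)]
  by_cases hu0 : tsupport u = ∅
  · have : u = 0 := by simpa [tsupport_eq_empty_iff] using hu0
    subst this
    simp
  obtain ⟨x1, hx1⟩ := nonempty_iff_ne_empty.2 hu0
  have hδR : δ ≤ R := (hδK x1 hx1).le.trans (hR x1)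
  -- the test function
  let ψ : EuclideanSpace ℝ (Fin n) → ℝ := fun x => g (max (d x) δ) * |u x|
  have hmem : ∀ x, max (d x) δ ∈ Icc δ R := fun x => ⟨le_max_right _ _, max_le (hR x) hδR⟩
  obtain ⟨Cu, hCu⟩ := ContDiff.lipschitzWith_of_hasCompactSupport huc hu (by simp)
  obtain ⟨Mu, hMu⟩ := huc.exists_bound_of_continuous hu.continuous
  have hgcont : ContinuousOn g (Icc δ R) := fun t ht =>
    (hg t (hδ.trans_le ht.1) ht.2).continuousAt.continuousWithinAt
  obtain ⟨Mg, hMg⟩ := isCompact_Icc.exists_bound_of_continuousOn hgcont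
  obtain ⟨Mg', hMg'⟩ := isCompact_Icc.exists_bound_of_continuousOn
    (hg'c.mono (fun t (ht : t ∈ Icc δ R) => ⟨hδ.trans_le ht.1, ht.2⟩))
  have hMg0 : 0 ≤ Mg := (norm_nonneg _).trans (hMg _ (hmem x1))
  have hMg'0 : 0 ≤ Mg' := (norm_nonneg _).trans (hMg' _ (hmem x1))
  have hMu0 : 0 ≤ Mu := (norm_nonneg _).trans (hMu x1)
  have hψlip : LipschitzWith ⟨Mg' * Mu + Mg * Cu, by positivity⟩ ψ := by
    refine LipschitzWith.of_dist_le_mul fun x y => ?_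
    have h1 : |g (max (d x) δ) - g (max (d y) δ)| ≤ Mg' * dist x y := by
      have := (convex_Icc δ R).norm_image_sub_le_of_norm_hasDerivWithin_le
        (fun t ht => (hg t (hδ.trans_le ht.1) ht.2).hasDerivWithinAt) hMg' (hmem y) (hmem x)
      refine this.trans (mul_le_mul_of_nonneg_left ?_ hMg'0)
      have h2 : |max (d x) δ - max (d y) δ| ≤ |d x - d y| := abs_max_sub_max_le_abs _ _ _
      refine h2.trans ?_
      simpa [Real.dist_eq] using hdlip.dist_le_mul x y
    have h2 : |(|u x| - |u y|)| ≤ Cu * dist x y :=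
      (abs_abs_sub_abs_le_abs_sub _ _).trans (by simpa [Real.dist_eq] using hCu.dist_le_mul x y)
    have h3 : |g (max (d y) δ)| ≤ Mg := hMg _ (hmem y)
    have h4 : |(|u x|)| ≤ Mu := by rw [abs_abs]; exact hMu x
    have e : ψ x - ψ y = (g (max (d x) δ) - g (max (d y) δ)) * |u x|
      + g (max (d y) δ) * (|u x| - |u y|) := by simp only [ψ]; ring
    rw [Real.dist_eq, e]
    refine (abs_add_le _ _).trans ?_
    rw [abs_mul, abs_mul]
    change _ ≤ (Mg' * Mu + Mg * Cu) * dist x y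
    have a1 := mul_le_mul h1 h4 (abs_nonneg _) (by positivity)
    have a2 := mul_le_mul h3 h2 (abs_nonneg _) hMg0
    nlinarith
  have hψsub : tsupport ψ ⊆ tsupport u := by
    refine closure_mono fun x hx => ?_
    intro h
    apply hx
    simp [ψ, h]
  have hψ0 : ∀ z, 0 ≤ ψ z := fun z =>
    mul_nonneg (hg0 _ (hδ.trans_le (hmem z).1) (hmem z).2) (abs_nonneg _)
  have hψc : HasCompactSupport ψ := hK.of_isClosed_subset (isClosed_tsupport _) hψsub
  have main := aux_lip hΩo hdlip hd0 hsub hψlip hψc (hψsub.trans hus) hψ0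
  have hcontd : ∀ {h : ℝ → ℝ}, ContinuousOn h (Ioc 0 R) → ContinuousOn (fun x => h (d x)) Ω :=
    fun hh => hh.comp hdlip.continuous.continuousOn fun x hx => ⟨hdpos x hx, hR x⟩
  have hgc : ContinuousOn g (Ioc 0 R) := fun t ht =>
    (hg t ht.1 ht.2).continuousAt.continuousWithinAt
  have hFs : Function.support (fun x => g (d x) * ‖fderiv ℝ u x‖ + g' (d x) * |u x|)
      ⊆ tsupport u := by
    intro x hx
    by_contra h
    apply hx
    simp [image_eq_zero_of_notMem_tsupport h, fderiv_of_notMem_tsupport (𝕜 := ℝ) h]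
  have hFts : tsupport (fun x => g (d x) * ‖fderiv ℝ u x‖ + g' (d x) * |u x|) ⊆ tsupport u :=
    closure_minimal hFs (isClosed_tsupport _)
  have hFcont : Continuous (fun x => g (d x) * ‖fderiv ℝ u x‖ + g' (d x) * |u x|) := by
    refine ContinuousOn.continuous_of_tsupport_subset ?_ hΩo (hFts.trans hus)
    exact ((hcontd hgc).mul (hu.continuous_fderiv (by simp)).norm.continuousOn).add
      ((hcontd hg'c).mul hu.continuous.abs.continuousOn)
  have hFint : Integrable (fun x => g (d x) * ‖fderiv ℝ u x‖ + g' (d x) * |u x|) :=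
    hFcont.integrable_of_hasCompactSupport
      (hK.of_isClosed_subset (isClosed_tsupport _) hFts)
  rw [setIntegral_eq_integral_of_forall_compl_eq_zero (fun x hx => by
    by_contra h
    exact hx (hus (hFs h)))]
  refine main.trans ?_
  by_cases hint : Integrable (fun x => ∑ i : Fin n,
      lineDeriv ℝ d x (EuclideanSpace.single i (1 : ℝ)) *
      lineDeriv ℝ ψ x (EuclideanSpace.single i (1 : ℝ)))
  swap
  · exfalso
    apply hint
    refine integrable_finsetSum _ fun i _ => ?_
    have : Integrable (fun x => lineDeriv ℝ ψ x (EuclideanSpace.single i (1 : ℝ))) := by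
      have hb : Integrable ((tsupport u).indicator fun _ : EuclideanSpace ℝ (Fin n) =>
          (Mg' * Mu + Mg * Cu) * ‖(EuclideanSpace.single i (1 : ℝ) : EuclideanSpace ℝ (Fin n))‖) :=
        (integrable_indicator_iff (isClosed_tsupport u).measurableSet).2
          (integrableOn_const hK.measure_lt_top.ne)
      refine hb.mono' (measurable_lineDeriv hψlip.continuous).aestronglyMeasurable
        (.of_forall fun x => ?_)
      by_cases hx : x ∈ tsupport u
      · rw [indicator_of_mem hx]
        exact norm_lineDeriv_le_of_lipschitz ℝ hψlip
      · rw [indicator_of_notMem hx]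
        have : ψ =ᶠ[𝓝 x] 0 := notMem_tsupport_iff_eventuallyEq.1 fun h => hx (hψsub h)
        rw [this.lineDeriv_eq]
        simp [lineDeriv]
    refine Integrable.bdd_mul (c := (1 : ℝ≥0) * ‖(EuclideanSpace.single i (1 : ℝ) : EuclideanSpace ℝ (Fin n))‖)
      this ?_ ?_
    · exact (measurable_lineDeriv hdlip.continuous).aestronglyMeasurable
    · exact .of_forall fun x => norm_lineDeriv_le_of_lipschitz ℝ hdlip
  refine integral_mono_ae hint hFint ?_
  filter_upwards [hdlip.ae_differentiableAt (μ := volume), hψlip.ae_differentiableAt (μ := volume)]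
    with x hdx hψx
  simp only [hdx.lineDeriv_eq_fderiv, hψx.lineDeriv_eq_fderiv]
  by_cases hux : u x = 0
  · have hmin : IsLocalMin ψ x := .of_forall fun z => by
      have : ψ x = 0 := by simp [ψ, hux]
      rw [this]; exact hψ0 z
    rw [hmin.fderiv_eq_zero]
    by_cases hx : x ∈ Ω
    · simpa [hux] using mul_nonneg (hg0 _ (hdpos x hx) (hR x)) (norm_nonneg _)
    · have hx' : x ∉ tsupport u := fun h => hx (hus h)
      simp [hux, fderiv_of_notMem_tsupport (𝕜 := ℝ) hx']
  have hxs : x ∈ tsupport u := subset_tsupport _ hux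
  have hxΩ := hus hxs
  have hdx0 := hdpos x hxΩ
  have hlocal : ∃ σ : ℝ, |σ| = 1 ∧ σ * u x = |u x| ∧ ψ =ᶠ[𝓝 x] fun z => g (d z) * (σ * u z) := by
    have hdn : ∀ᶠ z in 𝓝 x, δ < d z :=
      hdlip.continuous.continuousAt.eventually (lt_mem_nhds (hδK x hxs))
    rcases lt_or_gt_of_ne hux with h | h
    · refine ⟨-1, by simp, by simp [abs_of_neg h], ?_⟩
      filter_upwards [hdn, hu.continuous.continuousAt.eventually (gt_mem_nhds h)] with z h1 h2
      simp [ψ, max_eq_left h1.le, abs_of_neg h2]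
    · refine ⟨1, by simp, by simp [abs_of_pos h], ?_⟩
      filter_upwards [hdn, hu.continuous.continuousAt.eventually (lt_mem_nhds h)] with z h1 h2
      simp [ψ, max_eq_left h1.le, abs_of_pos h2]
  obtain ⟨σ, hσ, hσu, hloc⟩ := hlocal
  have hux' : HasFDerivAt u (fderiv ℝ u x) x := (hu.differentiable (by simp)).differentiableAt.hasFDerivAt
  have hgd : HasFDerivAt (fun z => g (d z)) (g' (d x) • fderiv ℝ d x) x :=
    (hg _ hdx0 (hR x)).comp_hasFDerivAt x hdx.hasFDerivAt
  have hψd := (hgd.mul (hux'.const_mul σ)).congr_of_eventuallyEq hloc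
  rw [hψd.fderiv]
  have hDn : ‖fderiv ℝ d x‖ ≤ 1 := by simpa using norm_fderiv_le_of_lipschitz ℝ hdlip
  obtain ⟨p1, p2⟩ := aux_pair (fderiv ℝ d x) (fderiv ℝ u x) hDn (aux_dist_grad hΩo hne hxΩ hdx)
  have e : ∑ i : Fin n, fderiv ℝ d x (EuclideanSpace.single i (1 : ℝ)) *
      ((g (d x) • σ • fderiv ℝ u x + (σ * u x) • g' (d x) • fderiv ℝ d x)
        (EuclideanSpace.single i (1 : ℝ))) =
      g (d x) * (σ * ∑ i : Fin n, fderiv ℝ d x (EuclideanSpace.single i (1 : ℝ)) *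
        fderiv ℝ u x (EuclideanSpace.single i (1 : ℝ))) +
      (g' (d x) * |u x|) * ∑ i : Fin n, fderiv ℝ d x (EuclideanSpace.single i (1 : ℝ)) *
        fderiv ℝ d x (EuclideanSpace.single i (1 : ℝ)) := by
    rw [← hσu]
    simp only [Finset.mul_sum, ← Finset.sum_add_distrib]
    refine Finset.sum_congr rfl fun i _ => ?_
    simp only [add_apply, smul_apply, smul_eq_mul]
    ring
  refine e.le.trans (add_le_add ?_ ?_)
  · refine mul_le_mul_of_nonneg_left ?_ (hg0 _ hdx0 (hR x))
    refine (le_abs_self _).trans ?_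
    rw [abs_mul, hσ, one_mul]
    exact p2
  · have : g' (d x) * |u x| ≤ 0 := mul_nonpos_of_nonpos_of_nonneg (hg'0 _ hdx0 (hR x)) (abs_nonneg _)
    nlinarith

theorem aux_int {n : ℕ} {Ω : Set (EuclideanSpace ℝ (Fin n))} (hΩo : IsOpen Ω)
    {f h : EuclideanSpace ℝ (Fin n) → ℝ} (hf : Continuous f) (hfc : HasCompactSupport f)
    (hfs : tsupport f ⊆ Ω) (hh : ContinuousOn h Ω) :
    IntegrableOn (fun x => f x * h x) Ω := by
  have h1 : tsupport (fun x => f x * h x) ⊆ tsupport f := tsupport_mul_subset_left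
  refine Integrable.integrableOn (Continuous.integrable_of_hasCompactSupport ?_
    (hfc.isCompact.of_isClosed_subset (isClosed_tsupport _) h1))
  exact ContinuousOn.continuous_of_tsupport_subset (hf.continuousOn.mul hh) hΩo (h1.trans hfs)

theorem aux_deriv {R s γ t : ℝ} (hR : 0 < R) (ht : 0 < t) (htR : t ≤ R) :
    HasDerivAt (fun t : ℝ => (t ^ (s - 1))⁻¹
        - (R ^ (s - 1))⁻¹ * ((1 - Real.log (t / R))⁻¹) ^ (γ - 1))
      (-((s - 1) * (t ^ s)⁻¹)
        - (R ^ (s - 1))⁻¹ * ((γ - 1) * (t⁻¹ * ((1 - Real.log (t / R))⁻¹) ^ γ))) t := by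
  have hL : 0 < 1 - Real.log (t / R) := by
    have : Real.log (t / R) ≤ 0 := Real.log_nonpos (by positivity) ((div_le_one hR).2 htR)
    linarith
  have h1 : HasDerivAt (fun t : ℝ => (t ^ (s - 1))⁻¹) (-((s - 1) * (t ^ s)⁻¹)) t := by
    have := (Real.hasDerivAt_rpow_const (p := s - 1) (Or.inl ht.ne')).inv
      (Real.rpow_pos_of_pos ht _).ne'
    refine this.congr_deriv ?_
    have e1 : t ^ s = t ^ (s - 1) * t := by
      rw [← Real.rpow_add_one ht.ne']; congr 1; ring
    have e2 : t ^ (s - 1) = t ^ (s - 1 - 1) * t := by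
      rw [← Real.rpow_add_one ht.ne']; congr 1; ring
    have hp := Real.rpow_pos_of_pos ht (s - 1 - 1)
    rw [e1, e2]
    field_simp
  have h2 : HasDerivAt (fun t : ℝ => 1 - Real.log (t / R)) (-t⁻¹) t := by
    have := (((hasDerivAt_id t).div_const R).log (by simp; exact ⟨ht.ne', hR.ne'⟩)).const_sub 1
    refine this.congr_deriv ?_
    simp only [id]
    field_simp
  have h3 : HasDerivAt (fun t : ℝ => ((1 - Real.log (t / R))⁻¹) ^ (γ - 1))
      ((γ - 1) * (t⁻¹ * ((1 - Real.log (t / R))⁻¹) ^ γ)) t := by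
    have := (h2.inv hL.ne').rpow_const (p := γ - 1) (Or.inl (inv_pos.2 hL).ne')
    refine this.congr_deriv ?_
    simp only [Pi.inv_apply]
    set L := 1 - Real.log (t / R)
    have hLi := inv_pos.2 hL
    have e1 : L⁻¹ ^ γ = L⁻¹ ^ (γ - 1 - 1) * L⁻¹ * L⁻¹ := by
      rw [← Real.rpow_add_one hLi.ne', ← Real.rpow_add_one hLi.ne']; congr 1; ring
    rw [e1]
    generalize L⁻¹ ^ (γ - 1 - 1) = q
    field_simp
  exact h1.sub (h3.const_mul _)

theorem l1_weighted_hardy_log_remainder_meanconvex (n : ℕ) (hn : 1 ≤ n)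
    (Ω : Set (EuclideanSpace ℝ (Fin n))) (hΩo : IsOpen Ω) (hΩne : Ω.Nonempty)
    (hΩuniv : Ω ≠ Set.univ)
    (hsub : ∀ φ : EuclideanSpace ℝ (Fin n) → ℝ, ContDiff ℝ (⊤ : ℕ∞) φ →
      HasCompactSupport φ → tsupport φ ⊆ Ω → (∀ z, 0 ≤ φ z) →
      (∫ x in Ω, Metric.infDist x Ωᶜ * lapl φ x) ≤ 0)
    (R : ℝ) (hR : IsLUB ((fun x => Metric.infDist x Ωᶜ) '' Ω) R) :
    ∀ s : ℝ, 1 ≤ s → ∀ γ : ℝ, 1 < γ →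
    ∀ u : EuclideanSpace ℝ (Fin n) → ℝ, ContDiff ℝ (⊤ : ℕ∞) u →
      HasCompactSupport u → tsupport u ⊆ Ω →
      (∫ x in Ω, ‖fderiv ℝ u x‖ / (Metric.infDist x Ωᶜ) ^ (s - 1)) ≥
        (s - 1) * (∫ x in Ω, |u x| / (Metric.infDist x Ωᶜ) ^ s)
        + ((γ - 1) / R ^ (s - 1)) *
            ∫ x in Ω, (|u x| / Metric.infDist x Ωᶜ) *
              ((1 - Real.log (Metric.infDist x Ωᶜ / R))⁻¹) ^ γ := by
  intro s hs γ hγ u hu huc hus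
  have hne : Ωᶜ.Nonempty := nonempty_compl.2 hΩuniv
  have hdpos : ∀ x ∈ Ω, 0 < infDist x Ωᶜ := fun x hx =>
    (hΩo.isClosed_compl.notMem_iff_infDist_pos hne).1 (by simpa using hx)
  have hRΩ : ∀ x ∈ Ω, infDist x Ωᶜ ≤ R := fun x hx => hR.1 (mem_image_of_mem _ hx)
  have hR0 : 0 < R := by
    obtain ⟨x, hx⟩ := hΩne
    exact (hdpos x hx).trans_le (hRΩ x hx)
  have hRall : ∀ x, infDist x Ωᶜ ≤ R := fun x => by
    by_cases hx : x ∈ Ω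
    · exact hRΩ x hx
    · rw [infDist_zero_of_mem hx]; exact hR0.le
  have hL : ∀ t, 0 < t → t ≤ R → 1 ≤ 1 - Real.log (t / R) := fun t ht htR => by
    have : Real.log (t / R) ≤ 0 := Real.log_nonpos (by positivity) ((div_le_one hR0).2 htR)
    linarith
  -- continuity
  have c1 : ∀ p : ℝ, ContinuousOn (fun t : ℝ => (t ^ p)⁻¹) (Ioc 0 R) := fun p t ht =>
    ((Real.continuousAt_rpow_const t p (Or.inl ht.1.ne')).inv₀
      (Real.rpow_pos_of_pos ht.1 _).ne').continuousWithinAt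
  have c0 : ∀ p : ℝ, 0 ≤ p →
      ContinuousOn (fun t : ℝ => ((1 - Real.log (t / R))⁻¹) ^ p) (Ioc 0 R) := by
    intro p hp t ht
    have hl := hL t ht.1 ht.2
    refine ContinuousAt.continuousWithinAt ?_
    refine ContinuousAt.rpow_const ?_ (Or.inr hp)
    refine ContinuousAt.inv₀ ?_ (by linarith)
    exact continuousAt_const.sub ((continuousAt_id.div_const R).log (by
      simpa using ⟨ht.1.ne', hR0.ne'⟩))
  have c2 : ContinuousOn (fun t : ℝ => t⁻¹ * ((1 - Real.log (t / R))⁻¹) ^ γ) (Ioc 0 R) :=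
    (continuousOn_id.inv₀ fun t ht => ht.1.ne').mul (c0 γ (by linarith))
  have hcd : ∀ {h : ℝ → ℝ}, ContinuousOn h (Ioc 0 R) →
      ContinuousOn (fun x => h (infDist x Ωᶜ)) Ω := fun hh =>
    hh.comp (continuous_infDist_pt _).continuousOn fun x hx => ⟨hdpos x hx, hRall x⟩
  have key := aux_main hΩo hne hsub hRall
    (g := fun t : ℝ => (t ^ (s - 1))⁻¹
        - (R ^ (s - 1))⁻¹ * ((1 - Real.log (t / R))⁻¹) ^ (γ - 1))
    (g' := fun t : ℝ => -((s - 1) * (t ^ s)⁻¹)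
        - (R ^ (s - 1))⁻¹ * ((γ - 1) * (t⁻¹ * ((1 - Real.log (t / R))⁻¹) ^ γ)))
    (fun t ht htR => aux_deriv hR0 ht htR)
    ((((c1 s).const_mul (s - 1)).neg).sub ((c2.const_mul (γ - 1)).const_mul _))
    (fun t ht htR => by
      have hl := hL t ht htR
      have a1 : ((1 - Real.log (t / R))⁻¹) ^ (γ - 1) ≤ 1 :=
        Real.rpow_le_one (inv_nonneg.2 (by linarith)) (inv_le_one_of_one_le₀ hl) (by linarith)
      have a2 : (R ^ (s - 1))⁻¹ ≤ (t ^ (s - 1))⁻¹ :=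
        inv_anti₀ (Real.rpow_pos_of_pos ht _) (Real.rpow_le_rpow ht.le htR (by linarith))
      have a3 : 0 ≤ (R ^ (s - 1))⁻¹ := by positivity
      have := mul_le_of_le_one_right a3 a1
      linarith)
    (fun t ht htR => by
      have hl := hL t ht htR
      have a0 : 0 ≤ (1 - Real.log (t / R))⁻¹ := inv_nonneg.2 (by linarith)
      have a1 : 0 ≤ (s - 1) * (t ^ s)⁻¹ := mul_nonneg (by linarith) (by positivity)
      have a2 : 0 ≤ (R ^ (s - 1))⁻¹ * ((γ - 1) * (t⁻¹ * ((1 - Real.log (t / R))⁻¹) ^ γ)) :=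
        mul_nonneg (by positivity) (mul_nonneg (by linarith)
          (mul_nonneg (by positivity) (Real.rpow_nonneg a0 _)))
      linarith) hu huc hus
  have huac : HasCompactSupport (fun x => |u x|) := huc.norm
  have huas : tsupport (fun x => |u x|) ⊆ Ω :=
    (closure_mono (Function.support_subset_iff'.2 fun x hx => by simpa using hx)).trans hus
  have hdc : HasCompactSupport (fun x => ‖fderiv ℝ u x‖) := (huc.fderiv ℝ).norm
  have hds : tsupport (fun x => ‖fderiv ℝ u x‖) ⊆ Ω :=
    ((closure_mono (Function.support_subset_iff'.2 fun x hx => by simpa using hx)).trans (tsupport_fderiv_subset ℝ)).trans hus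
  have I1 := aux_int hΩo (hu.continuous_fderiv (by simp)).norm hdc hds (hcd (c1 (s - 1)))
  have I2 := aux_int hΩo hu.continuous.abs huac huas (hcd (c1 s))
  have I3 := aux_int hΩo hu.continuous.abs huac huas (hcd c2)
  have I5 := aux_int hΩo (hu.continuous_fderiv (by simp)).norm hdc hds
    (hcd (c0 (γ - 1) (by linarith)))
  have I6 : IntegrableOn (fun x => ‖fderiv ℝ u x‖ * (infDist x Ωᶜ ^ (s - 1))⁻¹
      - (s - 1) * (|u x| * (infDist x Ωᶜ ^ s)⁻¹)) Ω := I1.sub (I2.const_mul (s - 1))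
  have I4 : IntegrableOn (fun x => ‖fderiv ℝ u x‖ * (infDist x Ωᶜ ^ (s - 1))⁻¹
      - (s - 1) * (|u x| * (infDist x Ωᶜ ^ s)⁻¹)
      - (γ - 1) / R ^ (s - 1) * (|u x| * ((infDist x Ωᶜ)⁻¹ *
          ((1 - Real.log (infDist x Ωᶜ / R))⁻¹) ^ γ))) Ω :=
    I6.sub (I3.const_mul ((γ - 1) / R ^ (s - 1)))
  have fin : 0 ≤ ∫ x in Ω, (‖fderiv ℝ u x‖ * (infDist x Ωᶜ ^ (s - 1))⁻¹
      - (s - 1) * (|u x| * (infDist x Ωᶜ ^ s)⁻¹)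
      - (γ - 1) / R ^ (s - 1) * (|u x| * ((infDist x Ωᶜ)⁻¹ *
          ((1 - Real.log (infDist x Ωᶜ / R))⁻¹) ^ γ))) := by
    refine key.trans (setIntegral_mono_on ?_ I4 hΩo.measurableSet fun x hx => ?_)
    · refine (I4.sub (I5.const_mul (R ^ (s - 1))⁻¹)).congr (.of_forall fun x => ?_)
      simp only [Pi.sub_apply]
      ring
    · have hl := hL _ (hdpos x hx) (hRall x)
      have a0 : 0 ≤ (1 - Real.log (infDist x Ωᶜ / R))⁻¹ := inv_nonneg.2 (by linarith)
      have a2 : 0 ≤ (R ^ (s - 1))⁻¹ * ((1 - Real.log (infDist x Ωᶜ / R))⁻¹ ^ (γ - 1)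
          * ‖fderiv ℝ u x‖) :=
        mul_nonneg (by positivity) (mul_nonneg (Real.rpow_nonneg a0 _) (norm_nonneg _))
      rw [div_eq_mul_inv (γ - 1)]
      linarith
  rw [integral_sub I6 (I3.const_mul _),
    integral_sub I1 (I2.const_mul _), integral_const_mul, integral_const_mul] at fin
  simp only [div_eq_mul_inv, mul_assoc] at fin ⊢
  linarith
end

section
/- Let n ≥ 1 and let Ω ⊊ ℝⁿ be a nonempty open set with d(x) := dist(x, ℝⁿ∖Ω), satisfying −Δd ≥ 0 in the sense of distributions on Ω (i.e. ∫_Ω d Δφ dx ≤ 0 for every nonnegative φ ∈ C_c^∞(Ω)) and having finite inner radius R := sup_{x ∈ Ω} d(x) < ∞. Then for every s > 1 and every u ∈ C_c^∞(Ω), one has ∫_Ω |∇u| / d^{s−1} dx ≥ (s−1) · ∫_Ω |u| / d^s dx + (1/R^{s−1}) · ∫_Ω |∇u| dx. -/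
open MeasureTheory Metric Set

section HardyAux

open Filter Topology
open scoped NNReal Convolution

/-- Line derivative of a mollified Lipschitz function. -/
theorem hardyaux_conv_lineDeriv {n : ℕ} {φ : EuclideanSpace ℝ (Fin n) → ℝ} {C : ℝ≥0}
    (hφ : LipschitzWith C φ) (η : EuclideanSpace ℝ (Fin n) → ℝ) (hη : Continuous η)
    (hηc : HasCompactSupport η) (x v : EuclideanSpace ℝ (Fin n)) :
    lineDeriv ℝ (η ⋆[ContinuousLinearMap.lsmul ℝ ℝ, volume] φ) x v =
      (η ⋆[ContinuousLinearMap.lsmul ℝ ℝ, volume] (fun y => lineDeriv ℝ φ y v)) x := by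
  have hmeas : AEStronglyMeasurable
      (fun t => lineDeriv ℝ φ (x - t) v) (volume : Measure (EuclideanSpace ℝ (Fin n))) :=
    ((measurable_lineDeriv hφ.continuous).comp (measurable_const.sub measurable_id)
      ).aestronglyMeasurable
  have key := hasDerivAt_integral_of_dominated_loc_of_lip (𝕜 := ℝ) (μ := volume)
    (F := fun (r : ℝ) (t : EuclideanSpace ℝ (Fin n)) => η t * φ (x + r • v - t))
    (F' := fun t => η t * lineDeriv ℝ φ (x - t) v) (x₀ := 0) (s := univ)
    (bound := fun t => |η t| * (C * ‖v‖)) univ_mem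
    (Eventually.of_forall fun r =>
      (hη.mul (hφ.continuous.comp (by fun_prop))).aestronglyMeasurable)
    ((hη.mul (hφ.continuous.comp (by fun_prop))).integrable_of_hasCompactSupport
      hηc.mul_right)
    (hη.aestronglyMeasurable.mul hmeas)
    (Eventually.of_forall fun t => by
      apply LipschitzOnWith.of_dist_le_mul
      intro a _ b _
      rw [Real.dist_eq, ← mul_sub, abs_mul, Real.coe_nnabs,
        abs_of_nonneg (by positivity : 0 ≤ |η t| * (C * ‖v‖))]
      have h1 := hφ.dist_le_mul (x + a • v - t) (x + b • v - t)
      rw [Real.dist_eq, dist_eq_norm] at h1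
      have h2 : x + a • v - t - (x + b • v - t) = (a - b) • v := by
        rw [sub_smul]; abel
      rw [h2, norm_smul] at h1
      calc |η t| * |φ (x + a • v - t) - φ (x + b • v - t)|
          ≤ |η t| * (C * (‖a - b‖ * ‖v‖)) := by gcongr
        _ = _ := by rw [Real.dist_eq, Real.norm_eq_abs]; ring)
    ((hη.abs.integrable_of_hasCompactSupport hηc.abs).mul_const _)
    (by
      have h0 := hφ.ae_lineDifferentiableAt (μ := volume) v
      have h1 := (Measure.measurePreserving_sub_left
        (volume : Measure (EuclideanSpace ℝ (Fin n))) x).quasiMeasurePreserving.ae h0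
      filter_upwards [h1] with t ht
      have h3 := (ht.hasLineDerivAt)
      have h4 : HasDerivAt (fun r : ℝ => φ (x - t + r • v)) (lineDeriv ℝ φ (x - t) v) 0 := h3
      have h5 := h4.const_mul (η t)
      have h6 : (fun r : ℝ => η t * φ (x + r • v - t)) = fun r => η t * φ (x - t + r • v) := by
        ext r
        congr 2
        abel
      rw [h6]
      exact h5)
  exact HasDerivAt.deriv key.2

theorem hardyaux_key {n : ℕ} {Ω : Set (EuclideanSpace ℝ (Fin n))} (hΩo : IsOpen Ω)
    {f φ : EuclideanSpace ℝ (Fin n) → ℝ} {B C : ℝ≥0}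
    (hsub : ∀ φ : EuclideanSpace ℝ (Fin n) → ℝ, ContDiff ℝ (⊤ : ℕ∞) φ →
      HasCompactSupport φ → tsupport φ ⊆ Ω → (∀ z, 0 ≤ φ z) →
      (∫ x in Ω, f x * lapl φ x) ≤ 0)
    (hf : LipschitzWith B f) (hφ : LipschitzWith C φ) (hφc : HasCompactSupport φ)
    (hφΩ : tsupport φ ⊆ Ω) (hφ0 : ∀ z, 0 ≤ φ z) :
    0 ≤ ∑ i : Fin n, ∫ x, lineDeriv ℝ f x (EuclideanSpace.single i (1 : ℝ)) *
      lineDeriv ℝ φ x (EuclideanSpace.single i (1 : ℝ)) := by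
  obtain ⟨ε, hε, hεΩ⟩ := hφc.exists_cthickening_subset_open hΩo hφΩ
  set K := cthickening ε (tsupport φ) with hK
  have hKc : IsCompact K := IsCompact.cthickening hφc
  have hpos : ∀ k : ℕ, 0 < ε / (k + 1) := fun k => by positivity
  let η : ℕ → ContDiffBump (0 : EuclideanSpace ℝ (Fin n)) := fun k =>
    ⟨ε / (k + 1) / 2, ε / (k + 1), half_pos (hpos k), half_lt_self (hpos k)⟩
  let g : ℕ → EuclideanSpace ℝ (Fin n) → ℝ := fun k =>
    (η k).normed volume ⋆[ContinuousLinearMap.lsmul ℝ ℝ, volume] φ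
  have hle : ∀ k, (η k).rOut ≤ ε := fun k => by
    change ε / (k + 1) ≤ ε
    exact div_le_self hε.le (by linarith [Nat.cast_nonneg (α := ℝ) k])
  have hgsm : ∀ k, ContDiff ℝ (⊤ : ℕ∞) (g k) := fun k =>
    (η k).hasCompactSupport_normed.contDiff_convolution_left _ (η k).contDiff_normed
      hφ.continuous.locallyIntegrable
  have hgsupp : ∀ k, tsupport (g k) ⊆ K := fun k => by
    refine closure_minimal ?_ isClosed_cthickening
    refine (support_convolution_subset _).trans ?_
    rw [(η k).support_normed_eq]
    rintro _ ⟨a, ha, b, hb, rfl⟩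
    refine mem_cthickening_of_dist_le _ b _ _ (subset_tsupport _ hb) ?_
    have : dist (a + b) b = dist a 0 := by simp [dist_eq_norm]
    simp only
    rw [this]
    exact (mem_ball.1 ha).le.trans (hle k)
  have hgc : ∀ k, HasCompactSupport (g k) := fun k =>
    hKc.of_isClosed_subset (isClosed_tsupport _) (hgsupp k)
  have hg0 : ∀ k z, 0 ≤ g k z := fun k z =>
    integral_nonneg fun t => mul_nonneg ((η k).nonneg_normed t) (hφ0 _)
  have hgd : ∀ k x v, fderiv ℝ (g k) x v =
      ((η k).normed volume ⋆[ContinuousLinearMap.lsmul ℝ ℝ, volume]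
        (fun y => lineDeriv ℝ φ y v)) x := fun k x v => by
    rw [← hardyaux_conv_lineDeriv hφ _ (η k).continuous_normed (η k).hasCompactSupport_normed,
      DifferentiableAt.lineDeriv_eq_fderiv]
    exact ((hgsm k).differentiable (by simp)).differentiableAt
  have hglip : ∀ k v x, ‖fderiv ℝ (g k) x v‖ ≤ C * ‖v‖ := fun k v x => by
    rw [hgd]
    have h1 := dist_convolution_le (f := (η k).normed volume) (μ := volume)
      (g := fun y => lineDeriv ℝ φ y v) (x₀ := x) (z₀ := 0) (R := (η k).rOut)
      (ε := C * ‖v‖) (by positivity) (η k).support_normed_eq.subset (η k).nonneg_normed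
      (η k).integral_normed (measurable_lineDeriv hφ.continuous).aestronglyMeasurable
      (fun y _ => by rw [dist_zero_right]; exact norm_lineDeriv_le_of_lipschitz ℝ hφ)
    simpa using h1
  -- step 1: the inequality for mollified functions
  have hstep : ∀ k, 0 ≤ ∑ i : Fin n, ∫ x, lineDeriv ℝ f x (EuclideanSpace.single i (1 : ℝ)) *
      fderiv ℝ (g k) x (EuclideanSpace.single i (1 : ℝ)) := by
    intro k
    have hs := hsub (g k) (hgsm k) (hgc k) ((hgsupp k).trans hεΩ) (hg0 k)
    let G : Fin n → EuclideanSpace ℝ (Fin n) → ℝ := fun i x =>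
      fderiv ℝ (g k) x (EuclideanSpace.single i (1 : ℝ))
    have hGsm : ∀ i, ContDiff ℝ (⊤ : ℕ∞) (G i) := fun i =>
      ((hgsm k).fderiv_right (m := (⊤ : ℕ∞)) (by simp)).clm_apply contDiff_const
    have hGsupp : ∀ i, tsupport (G i) ⊆ tsupport (g k) := fun i => by
      refine closure_minimal ?_ (isClosed_tsupport _)
      intro x hx
      refine support_fderiv_subset ℝ (f := g k) ?_
      rw [Function.mem_support] at hx ⊢
      intro h0
      apply hx
      simp [G, h0]
    have hGc : ∀ i, HasCompactSupport (G i) := fun i =>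
      (hgc k).of_isClosed_subset (isClosed_tsupport _) (hGsupp i)
    have hG'sm : ∀ i, Continuous (fun x => fderiv ℝ (G i) x (EuclideanSpace.single i (1 : ℝ))) :=
      fun i => (((hGsm i).continuous_fderiv (by simp)).clm_apply continuous_const)
    have hG'c : ∀ i, HasCompactSupport
        (fun x => fderiv ℝ (G i) x (EuclideanSpace.single i (1 : ℝ))) :=
      fun i => ((hGc i).fderiv ℝ).comp_left
        (g := fun L : EuclideanSpace ℝ (Fin n) →L[ℝ] ℝ => L (EuclideanSpace.single i (1 : ℝ))) rfl
    have hibp : ∀ i, ∫ x, lineDeriv ℝ f x (EuclideanSpace.single i (1 : ℝ)) * G i x =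
        - ∫ x, f x * fderiv ℝ (G i) x (EuclideanSpace.single i (1 : ℝ)) := fun i => by
      obtain ⟨D, hD⟩ := ContDiff.lipschitzWith_of_hasCompactSupport (hGc i) (hGsm i) (by simp)
      rw [hf.integral_lineDeriv_mul_eq hD (hGc i), ← integral_neg]
      congr 1
      ext x
      rw [(((hGsm i).differentiable (by simp)).differentiableAt).lineDeriv_eq_fderiv, map_neg]
      ring
    have hsum : ∫ x in Ω, f x * lapl (g k) x =
        ∑ i, ∫ x, f x * fderiv ℝ (G i) x (EuclideanSpace.single i (1 : ℝ)) := by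
      rw [setIntegral_eq_integral_of_forall_compl_eq_zero]
      · rw [← integral_finsetSum]
        · congr 1
          ext x
          rw [lapl, Finset.mul_sum]
        · intro i _
          exact (hf.continuous.mul (hG'sm i)).integrable_of_hasCompactSupport (hG'c i).mul_left
      · intro x hx
        rw [lapl, Finset.sum_eq_zero, mul_zero]
        intro i _
        have : fderiv ℝ (G i) x = 0 := by
          by_contra h
          exact hx (hεΩ (hgsupp k (hGsupp i (support_fderiv_subset ℝ (f := G i) h))))
        change fderiv ℝ (G i) x _ = 0
        rw [this]; rfl
    rw [hsum] at hs
    change 0 ≤ ∑ i, ∫ x, lineDeriv ℝ f x (EuclideanSpace.single i (1 : ℝ)) * G i x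
    simp_rw [hibp]
    rw [Finset.sum_neg_distrib]
    linarith
  refine ge_of_tendsto' (f := fun k : ℕ => ∑ i : Fin n,
    ∫ x, lineDeriv ℝ f x (EuclideanSpace.single i (1 : ℝ)) *
      fderiv ℝ (g k) x (EuclideanSpace.single i (1 : ℝ))) (x := atTop) ?_ hstep
  refine tendsto_finsetSum _ fun i _ => ?_
  set e := EuclideanSpace.single i (1 : ℝ) with he
  refine tendsto_integral_of_dominated_convergence
    (K.indicator fun _ => (B * ‖e‖) * (C * ‖e‖)) ?_ ?_ ?_ ?_
  · intro k
    exact ((measurable_lineDeriv hf.continuous).aestronglyMeasurable).mul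
      (((hgsm k).continuous_fderiv (by simp)).clm_apply continuous_const).aestronglyMeasurable
  · rw [integrable_indicator_iff hKc.measurableSet]
    exact continuousOn_const.integrableOn_compact hKc
  · intro k
    refine Eventually.of_forall fun x => ?_
    by_cases hx : x ∈ K
    · rw [indicator_of_mem hx, norm_mul]
      have := hglip k e x
      have := norm_lineDeriv_le_of_lipschitz ℝ hf (x₀ := x) (v := e)
      gcongr
    · rw [indicator_of_notMem hx]
      have : fderiv ℝ (g k) x = 0 := by
        by_contra h
        exact hx (hgsupp k (support_fderiv_subset ℝ (f := g k) h))
      simp [this]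
  · have h1 := ContDiffBump.ae_convolution_tendsto_right_of_locallyIntegrable
      (φ := η) (l := atTop) (K := 2) (μ := volume)
      (g := fun y => lineDeriv ℝ φ y e)
      (by
        change Tendsto (fun k : ℕ => ε / ((k : ℝ) + 1)) atTop (𝓝 0)
        exact tendsto_const_div_atTop_nhds_zero_nat ε |>.comp (tendsto_add_atTop_nat 1) |>.congr
          (fun k => by simp))
      (Eventually.of_forall fun k => by
        change ε / (k + 1) ≤ 2 * (ε / (k + 1) / 2)
        linarith)
      (hφ.locallyIntegrable_lineDeriv e)
    filter_upwards [h1] with x hx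
    simp_rw [hgd]
    exact hx.const_mul _

theorem hardyaux_sum_eq {n : ℕ} (L M : EuclideanSpace ℝ (Fin n) →L[ℝ] ℝ) :
    ∑ i : Fin n, L (EuclideanSpace.single i (1 : ℝ)) * M (EuclideanSpace.single i (1 : ℝ)) =
      inner ℝ ((InnerProductSpace.toDual ℝ _).symm L) ((InnerProductSpace.toDual ℝ _).symm M) := by
  rw [← (EuclideanSpace.basisFun (Fin n) ℝ).sum_inner_mul_inner]
  refine Finset.sum_congr rfl fun i _ => ?_
  rw [real_inner_comm ((InnerProductSpace.toDual ℝ _).symm M),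
    InnerProductSpace.toDual_symm_apply, InnerProductSpace.toDual_symm_apply]
  simp

theorem hardyaux_sum_le {n : ℕ} (L M : EuclideanSpace ℝ (Fin n) →L[ℝ] ℝ) :
    ∑ i : Fin n, L (EuclideanSpace.single i (1 : ℝ)) * M (EuclideanSpace.single i (1 : ℝ)) ≤
      ‖L‖ * ‖M‖ := by
  rw [hardyaux_sum_eq]
  exact (real_inner_le_norm _ _).trans (by simp)

theorem hardyaux_sum_sq {n : ℕ} (L : EuclideanSpace ℝ (Fin n) →L[ℝ] ℝ) :
    ∑ i : Fin n, L (EuclideanSpace.single i (1 : ℝ)) * L (EuclideanSpace.single i (1 : ℝ)) =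
      ‖L‖ ^ 2 := by
  rw [hardyaux_sum_eq, real_inner_self_eq_norm_sq]
  simp

theorem hardyaux_grad {n : ℕ} {S : Set (EuclideanSpace ℝ (Fin n))} (hS : IsClosed S)
    (hne : S.Nonempty) {x : EuclideanSpace ℝ (Fin n)} (hx : x ∉ S)
    (hd : DifferentiableAt ℝ (fun y => infDist y S) x) :
    ‖fderiv ℝ (fun y => infDist y S) x‖ = 1 := by
  apply le_antisymm
  · simpa using norm_fderiv_le_of_lipschitz ℝ (lipschitz_infDist_pt S) (x₀ := x)
  obtain ⟨y, hy, hxy⟩ := hS.exists_infDist_eq_dist hne x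
  have hpos : 0 < infDist x S := (hS.notMem_iff_infDist_pos hne).1 hx
  set L := fderiv ℝ (fun y => infDist y S) x with hL
  have h1 : HasDerivAt (fun t : ℝ => infDist (x + t • (y - x)) S) (L (y - x)) 0 :=
    hd.hasFDerivAt.hasLineDerivAt (y - x)
  have h2 : HasDerivAt (fun t : ℝ => (1 - t) * infDist x S) (-infDist x S) 0 := by
    simpa using ((hasDerivAt_id (0 : ℝ)).const_sub 1).mul_const (infDist x S)
  have h3 : ∀ t ∈ Icc (0 : ℝ) 1, infDist (x + t • (y - x)) S = (1 - t) * infDist x S := by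
    intro t ht
    apply le_antisymm
    · refine (infDist_le_dist_of_mem hy).trans (le_of_eq ?_)
      rw [hxy, dist_eq_norm, dist_eq_norm]
      have : x + t • (y - x) - y = (1 - t) • (x - y) := by module
      rw [this, norm_smul, Real.norm_eq_abs, abs_of_nonneg (by linarith [ht.2])]
    · have h := infDist_le_infDist_add_dist (s := S) (x := x) (y := x + t • (y - x))
      have h' : dist x (x + t • (y - x)) = t * infDist x S := by
        rw [hxy, dist_eq_norm, dist_comm, dist_eq_norm]
        simp [norm_smul, abs_of_nonneg ht.1]
      rw [h'] at h
      linarith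
  have h4 : L (y - x) = -infDist x S := by
    have e1 := h1.hasDerivWithinAt (s := Icc 0 1)
    have e2 := h2.hasDerivWithinAt (s := Icc 0 1)
    have e3 : HasDerivWithinAt (fun t : ℝ => infDist (x + t • (y - x)) S) (-infDist x S)
        (Icc 0 1) 0 := e2.congr h3 (h3 0 (by simp))
    exact (uniqueDiffOn_Icc zero_lt_one 0 (by simp)).eq_deriv _ e1 e3
  have h5 := L.le_opNorm (y - x)
  rw [h4, norm_neg, Real.norm_eq_abs, abs_of_pos hpos, ← dist_eq_norm, dist_comm, ← hxy] at h5
  nlinarith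

theorem hardyaux_abs {n : ℕ} {u : EuclideanSpace ℝ (Fin n) → ℝ} {x : EuclideanSpace ℝ (Fin n)}
    (hu : DifferentiableAt ℝ u x) :
    ‖fderiv ℝ (fun y => |u y|) x‖ ≤ ‖fderiv ℝ u x‖ := by
  rcases lt_trichotomy (u x) 0 with h | h | h
  · have : (fun y => |u y|) =ᶠ[𝓝 x] fun y => -u y := by
      filter_upwards [hu.continuousAt.eventually_lt continuousAt_const h] with y hy
      exact abs_of_neg hy
    rw [this.fderiv_eq, fderiv_fun_neg, norm_neg]
  · have : IsLocalMin (fun y => |u y|) x := by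
      refine Eventually.of_forall fun y => ?_
      simp [h]
    rw [this.fderiv_eq_zero, norm_zero]
    exact norm_nonneg _
  · have : (fun y => |u y|) =ᶠ[𝓝 x] fun y => u y := by
      filter_upwards [continuousAt_const.eventually_lt hu.continuousAt h] with y hy
      exact abs_of_pos hy
    rw [this.fderiv_eq]

/-- Pointwise estimate. -/
theorem hardyaux_pointwise {n : ℕ} {S : Set (EuclideanSpace ℝ (Fin n))} (hS : IsClosed S)
    (hne : S.Nonempty) {x : EuclideanSpace ℝ (Fin n)} (hx : x ∉ S)
    (hd : DifferentiableAt ℝ (fun y => infDist y S) x)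
    {u φ : EuclideanSpace ℝ (Fin n) → ℝ} (hu : DifferentiableAt ℝ u x)
    (hau : DifferentiableAt ℝ (fun y => |u y|) x) {s R : ℝ} (hs : 1 < s)
    (hR : infDist x S ≤ R)
    (hφ : φ = fun y => |u y| * (infDist y S ^ (1 - s) - R ^ (1 - s))) :
    ∑ i : Fin n, lineDeriv ℝ (fun y => infDist y S) x (EuclideanSpace.single i (1 : ℝ)) *
      lineDeriv ℝ φ x (EuclideanSpace.single i (1 : ℝ)) ≤
    ‖fderiv ℝ u x‖ / infDist x S ^ (s - 1) - (s - 1) * (|u x| / infDist x S ^ s)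
      - 1 / R ^ (s - 1) * ‖fderiv ℝ u x‖ := by
  have hpos : 0 < infDist x S := (hS.notMem_iff_infDist_pos hne).1 hx
  have hRpos : 0 < R := hpos.trans_le hR
  set L := fderiv ℝ (fun y => infDist y S) x with hL
  set M := fderiv ℝ (fun y => |u y|) x with hM
  have hL1 : ‖L‖ = 1 := hardyaux_grad hS hne hx hd
  have hM1 : ‖M‖ ≤ ‖fderiv ℝ u x‖ := hardyaux_abs hu
  have hw : HasFDerivAt (fun y => infDist y S ^ (1 - s))
      (((1 - s) * infDist x S ^ (1 - s - 1)) • L) x :=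
    hd.hasFDerivAt.rpow_const (Or.inl hpos.ne')
  have hφd : HasFDerivAt φ (|u x| • (((1 - s) * infDist x S ^ (1 - s - 1)) • L) +
      (infDist x S ^ (1 - s) - R ^ (1 - s)) • M) x := by
    rw [hφ]
    exact hau.hasFDerivAt.mul (hw.sub_const _)
  have hsum : ∑ i : Fin n, lineDeriv ℝ (fun y => infDist y S) x (EuclideanSpace.single i (1 : ℝ)) *
      lineDeriv ℝ φ x (EuclideanSpace.single i (1 : ℝ)) =
      |u x| * ((1 - s) * infDist x S ^ (1 - s - 1)) * ‖L‖ ^ 2 +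
      (infDist x S ^ (1 - s) - R ^ (1 - s)) * ∑ i : Fin n,
        L (EuclideanSpace.single i (1 : ℝ)) * M (EuclideanSpace.single i (1 : ℝ)) := by
    rw [← hardyaux_sum_sq, Finset.mul_sum, Finset.mul_sum, ← Finset.sum_add_distrib]
    refine Finset.sum_congr rfl fun i _ => ?_
    rw [hd.lineDeriv_eq_fderiv, hφd.differentiableAt.lineDeriv_eq_fderiv, hφd.fderiv]
    simp [← hL]
    ring
  have hLM := hardyaux_sum_le L M
  rw [hL1, one_mul] at hLM
  have hnn : 0 ≤ infDist x S ^ (1 - s) - R ^ (1 - s) :=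
    sub_nonneg.2 (Real.rpow_le_rpow_of_nonpos hpos hR (by linarith))
  have e1 : infDist x S ^ (1 - s - 1) = (infDist x S ^ s)⁻¹ := by
    rw [← Real.rpow_neg hpos.le]; congr 1; ring
  have e2 : infDist x S ^ (1 - s) = (infDist x S ^ (s - 1))⁻¹ := by
    rw [← Real.rpow_neg hpos.le]; congr 1; ring
  have e3 : R ^ (1 - s) = (R ^ (s - 1))⁻¹ := by
    rw [← Real.rpow_neg hRpos.le]; congr 1; ring
  have h := mul_le_mul_of_nonneg_left (hLM.trans hM1) hnn
  rw [hsum, hL1, e1]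
  rw [e2, e3] at h ⊢
  simp only [div_eq_mul_inv]
  linarith

end HardyAux

/-- `L^1` weighted Hardy inequality with gradient remainder on sets
satisfying `−Δd ≥ 0` and having finite inner radius. -/
theorem l1_weighted_hardy_gradient_remainder_meanconvex (n : ℕ) (hn : 1 ≤ n)
    (Ω : Set (EuclideanSpace ℝ (Fin n))) (hΩo : IsOpen Ω) (hΩne : Ω.Nonempty)
    (hΩuniv : Ω ≠ Set.univ)
    (hsub : ∀ φ : EuclideanSpace ℝ (Fin n) → ℝ, ContDiff ℝ (⊤ : ℕ∞) φ →
      HasCompactSupport φ → tsupport φ ⊆ Ω → (∀ z, 0 ≤ φ z) →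
      (∫ x in Ω, Metric.infDist x Ωᶜ * lapl φ x) ≤ 0)
    (R : ℝ) (hR : IsLUB ((fun x => Metric.infDist x Ωᶜ) '' Ω) R) :
    ∀ s : ℝ, 1 < s →
    ∀ u : EuclideanSpace ℝ (Fin n) → ℝ, ContDiff ℝ (⊤ : ℕ∞) u →
      HasCompactSupport u → tsupport u ⊆ Ω →
      (∫ x in Ω, ‖fderiv ℝ u x‖ / (Metric.infDist x Ωᶜ) ^ (s - 1)) ≥
        (s - 1) * (∫ x in Ω, |u x| / (Metric.infDist x Ωᶜ) ^ s)
        + (1 / R ^ (s - 1)) * ∫ x in Ω, ‖fderiv ℝ u x‖ := by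
  intro s hs u hu huc huΩ
  have hS : IsClosed Ωᶜ := hΩo.isClosed_compl
  have hne : (Ωᶜ).Nonempty := nonempty_compl.2 hΩuniv
  have hdpos : ∀ x ∈ Ω, 0 < infDist x Ωᶜ := fun x hx =>
    (hS.notMem_iff_infDist_pos hne).1 (by simpa using hx)
  have hdR : ∀ x ∈ Ω, infDist x Ωᶜ ≤ R := fun x hx => hR.1 ⟨x, hx, rfl⟩
  have hdlip : LipschitzWith 1 (fun x => infDist x Ωᶜ) := lipschitz_infDist_pt _
  -- lower bound of the distance on the support
  obtain ⟨δ, hδ, hδd⟩ : ∃ δ : ℝ, 0 < δ ∧ ∀ x ∈ tsupport u, δ ≤ infDist x Ωᶜ := by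
    rcases (tsupport u).eq_empty_or_nonempty with h | h
    · exact ⟨1, one_pos, by simp [h]⟩
    · obtain ⟨z, hz, hzm⟩ := IsCompact.exists_isMinOn huc h hdlip.continuous.continuousOn
      exact ⟨_, hdpos z (huΩ hz), fun x hx => hzm hx⟩
  let m : EuclideanSpace ℝ (Fin n) → ℝ := fun x => max (infDist x Ωᶜ) δ
  have hmc : Continuous m := hdlip.continuous.max continuous_const
  have hmpos : ∀ x, 0 < m x := fun x => lt_max_of_lt_right hδ
  have hm : ∀ x ∈ tsupport u, m x = infDist x Ωᶜ := fun x hx => max_eq_left (hδd x hx)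
  have hu0 : ∀ x, x ∉ tsupport u → u x = 0 := fun x hx => image_eq_zero_of_notMem_tsupport hx
  have hu0' : ∀ x, x ∉ tsupport u → fderiv ℝ u x = 0 := fun x hx => by
    by_contra h
    exact hx (support_fderiv_subset ℝ (f := u) h)
  have hf'c : Continuous (fun x => ‖fderiv ℝ u x‖) := (hu.continuous_fderiv (by simp)).norm
  have hf's : HasCompactSupport (fun x => ‖fderiv ℝ u x‖) := (huc.fderiv ℝ).norm
  have I1 : Integrable (fun x => ‖fderiv ℝ u x‖ / infDist x Ωᶜ ^ (s - 1)) := by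
    have : (fun x => ‖fderiv ℝ u x‖ / infDist x Ωᶜ ^ (s - 1)) =
        fun x => ‖fderiv ℝ u x‖ * (m x ^ (s - 1))⁻¹ := by
      ext x
      by_cases hx : x ∈ tsupport u
      · rw [hm x hx, div_eq_mul_inv]
      · simp [hu0' x hx]
    rw [this]
    refine (hf'c.mul (Continuous.inv₀ (hmc.rpow_const fun x => Or.inl (hmpos x).ne')
      fun x => (Real.rpow_pos_of_pos (hmpos x) _).ne')).integrable_of_hasCompactSupport
      hf's.mul_right
  have I2 : Integrable (fun x => |u x| / infDist x Ωᶜ ^ s) := by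
    have : (fun x => |u x| / infDist x Ωᶜ ^ s) = fun x => |u x| * (m x ^ s)⁻¹ := by
      ext x
      by_cases hx : x ∈ tsupport u
      · rw [hm x hx, div_eq_mul_inv]
      · simp [hu0 x hx]
    rw [this]
    refine (hu.continuous.abs.mul (Continuous.inv₀ (hmc.rpow_const fun x => Or.inl (hmpos x).ne')
      fun x => (Real.rpow_pos_of_pos (hmpos x) _).ne')).integrable_of_hasCompactSupport
      huc.abs.mul_right
  have I3 : Integrable (fun x => ‖fderiv ℝ u x‖) := hf'c.integrable_of_hasCompactSupport hf's
  -- the test function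
  let φ : EuclideanSpace ℝ (Fin n) → ℝ := fun y =>
    |u y| * (infDist y Ωᶜ ^ (1 - s) - R ^ (1 - s))
  have hφm : φ = fun y => |u y| * (m y ^ (1 - s) - R ^ (1 - s)) := by
    ext x
    by_cases hx : x ∈ tsupport u
    · simp only [φ, hm x hx]
    · simp [φ, hu0 x hx]
  have hφt : tsupport φ ⊆ tsupport u := by
    refine closure_minimal (fun x hx => ?_) (isClosed_tsupport _)
    by_contra h
    exact hx (by simp [φ, hu0 x h])
  have hφc : HasCompactSupport φ := huc.of_isClosed_subset (isClosed_tsupport _) hφt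
  have hφ0 : ∀ z, 0 ≤ φ z := fun z => by
    by_cases hz : z ∈ tsupport u
    · exact mul_nonneg (abs_nonneg _) (sub_nonneg.2 (Real.rpow_le_rpow_of_nonpos
        (hdpos z (huΩ hz)) (hdR z (huΩ hz)) (by linarith)))
    · simp [φ, hu0 z hz]
  obtain ⟨A, hA⟩ := ContDiff.lipschitzWith_of_hasCompactSupport huc hu (by simp)
  have haulip : LipschitzWith A (fun y => |u y|) := by
    refine LipschitzWith.of_dist_le_mul fun x y => ?_
    refine le_trans ?_ (hA.dist_le_mul x y)
    rw [Real.dist_eq, Real.dist_eq]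
    exact abs_abs_sub_abs_le _ _
  obtain ⟨C, hC⟩ : ∃ C, LipschitzWith C φ := by
    obtain ⟨U, hU⟩ := huc.exists_bound_of_continuous hu.continuous
    have hU0 : 0 ≤ U := (norm_nonneg _).trans (hU 0)
    have hmlip : LipschitzWith 1 m := hdlip.max_const δ
    -- the power function is Lipschitz on `[δ, ∞)`
    set P : ℝ := (s - 1) * δ ^ (-s) with hP
    have hP0 : 0 ≤ P := mul_nonneg (by linarith) (Real.rpow_nonneg hδ.le _)
    have hpow : ∀ a ∈ Ici δ, ∀ b ∈ Ici δ, |a ^ (1 - s) - b ^ (1 - s)| ≤ P * |a - b| := by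
      intro a ha b hb
      have := (convex_Ici δ).norm_image_sub_le_of_norm_hasDerivWithin_le
        (f := fun t : ℝ => t ^ (1 - s)) (f' := fun t => (1 - s) * t ^ (1 - s - 1)) (C := P)
        (fun t ht => (Real.hasDerivAt_rpow_const
          (Or.inl (hδ.trans_le ht).ne')).hasDerivWithinAt)
        (fun t ht => by
          have ht' : 0 < t := hδ.trans_le ht
          rw [norm_mul, Real.norm_eq_abs, Real.norm_eq_abs,
            abs_of_nonneg (Real.rpow_nonneg ht'.le _), abs_of_neg (by linarith : 1 - s < 0), hP]
          have e : (1 - s - 1) = -s := by ring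
          rw [e]
          have := Real.rpow_le_rpow_of_nonpos hδ ht (by linarith : -s ≤ 0)
          have h1 : 0 < s - 1 := by linarith
          nlinarith)
        hb ha
      simpa using this
    set W : ℝ := δ ^ (1 - s) + |R ^ (1 - s)| with hW
    have hWb : ∀ y, |m y ^ (1 - s) - R ^ (1 - s)| ≤ W := fun y => by
      refine (abs_sub _ _).trans ?_
      rw [abs_of_nonneg (Real.rpow_nonneg (hmpos y).le _), hW]
      have := Real.rpow_le_rpow_of_nonpos hδ (le_max_right _ _ : δ ≤ m y)
        (by linarith : 1 - s ≤ 0)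
      linarith
    have hW0 : 0 ≤ W := (abs_nonneg _).trans (hWb 0)
    refine ⟨Real.toNNReal (A * W + U * P), LipschitzWith.of_dist_le_mul fun x y => ?_⟩
    rw [Real.coe_toNNReal _ (by positivity), hφm, Real.dist_eq]
    have e : |u x| * (m x ^ (1 - s) - R ^ (1 - s)) - |u y| * (m y ^ (1 - s) - R ^ (1 - s)) =
        (|u x| - |u y|) * (m x ^ (1 - s) - R ^ (1 - s)) +
          |u y| * (m x ^ (1 - s) - m y ^ (1 - s)) := by ring
    simp only
    rw [e]
    refine (abs_add_le _ _).trans ?_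
    rw [abs_mul, abs_mul, abs_abs]
    have h1 : |(|u x| - |u y|)| ≤ A * dist x y := haulip.dist_le_mul x y
    have h2 : |m x ^ (1 - s) - m y ^ (1 - s)| ≤ P * dist x y := by
      refine (hpow (m x) (le_max_right _ _ : δ ≤ m x) (m y) (le_max_right _ _ : δ ≤ m y)).trans ?_
      have := hmlip.dist_le_mul x y
      rw [Real.dist_eq] at this
      simp only [NNReal.coe_one, one_mul] at this
      gcongr
    have h3 : |u y| ≤ U := hU y
    calc _ ≤ (A * dist x y) * W + U * (P * dist x y) := by
            gcongr
            exact hWb x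
      _ = _ := by ring
  have hkey := hardyaux_key hΩo hsub hdlip hC hφc (hφt.trans huΩ) hφ0
  have hint : ∀ i : Fin n, Integrable (fun x =>
      lineDeriv ℝ (fun y => infDist y Ωᶜ) x (EuclideanSpace.single i (1 : ℝ)) *
      lineDeriv ℝ φ x (EuclideanSpace.single i (1 : ℝ))) := fun i => by
    have hφ' : ∀ x, x ∉ tsupport u → lineDeriv ℝ φ x (EuclideanSpace.single i (1 : ℝ)) = 0 := by
      intro x hx
      have h1 : φ =ᶠ[nhds x] fun _ => 0 := by
        have := notMem_tsupport_iff_eventuallyEq.1 (fun h => hx (hφt h))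
        exact this
      rw [h1.lineDeriv_eq]
      simp [lineDeriv]
    have hi : Integrable (fun x => lineDeriv ℝ φ x (EuclideanSpace.single i (1 : ℝ))) := by
      refine (integrableOn_iff_integrable_of_support_subset (s := tsupport u) ?_).1 ?_
      · intro x hx
        by_contra h
        exact hx (hφ' x h)
      · exact (hC.locallyIntegrable_lineDeriv _).integrableOn_isCompact huc
    exact hi.bdd_mul (c := (1 : NNReal) * ‖EuclideanSpace.single i (1 : ℝ)‖)
      (measurable_lineDeriv hdlip.continuous).aestronglyMeasurable
      (Filter.Eventually.of_forall fun x => norm_lineDeriv_le_of_lipschitz ℝ hdlip)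
  rw [← integral_finsetSum _ (fun i _ => hint i)] at hkey
  have hfin : ∫ x, ∑ i : Fin n,
      lineDeriv ℝ (fun y => infDist y Ωᶜ) x (EuclideanSpace.single i (1 : ℝ)) *
      lineDeriv ℝ φ x (EuclideanSpace.single i (1 : ℝ)) ≤
      ∫ x, (‖fderiv ℝ u x‖ / infDist x Ωᶜ ^ (s - 1) - (s - 1) * (|u x| / infDist x Ωᶜ ^ s)
        - 1 / R ^ (s - 1) * ‖fderiv ℝ u x‖) := by
    refine integral_mono_ae (integrable_finsetSum _ fun i _ => hint i)
      ((I1.sub (I2.const_mul _)).sub (I3.const_mul _)) ?_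
    filter_upwards [hdlip.ae_differentiableAt (μ := volume),
      haulip.ae_differentiableAt (μ := volume)] with x h1 h2
    by_cases hx : x ∈ Ω
    · exact hardyaux_pointwise hS hne (by simpa using hx) h1
        ((hu.differentiable (by simp)).differentiableAt) h2 hs (hdR x hx) rfl
    · have hx' : x ∉ tsupport u := fun h => hx (huΩ h)
      have h3 : φ =ᶠ[nhds x] fun _ => 0 :=
        notMem_tsupport_iff_eventuallyEq.1 (fun h => hx' (hφt h))
      simp only [h3.lineDeriv_eq, hu0 x hx', hu0' x hx']
      simp [lineDeriv]
  have I12 : Integrable (fun x => ‖fderiv ℝ u x‖ / infDist x Ωᶜ ^ (s - 1) -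
      (s - 1) * (|u x| / infDist x Ωᶜ ^ s)) := I1.sub (I2.const_mul _)
  rw [integral_sub I12 (I3.const_mul _), integral_sub I1 (I2.const_mul _),
   integral_const_mul, integral_const_mul] at hfin
  have E : ∀ F : EuclideanSpace ℝ (Fin n) → ℝ, (∀ x, x ∉ tsupport u → F x = 0) →
      ∫ x in Ω, F x = ∫ x, F x := fun F hF =>
    setIntegral_eq_integral_of_forall_compl_eq_zero fun x hx => hF x fun h => hx (huΩ h)
  rw [E _ fun x hx => by simp [hu0' x hx], E _ fun x hx => by simp [hu0 x hx],
    E _ fun x hx => by simp [hu0' x hx]]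
  linarith
end

section
/- Let n ≥ 1, R > 0, and let B_R := {x ∈ ℝⁿ : |x| < R} with d(x) := R − |x|. Then for every s ≥ 2, every γ > 1, and every u ∈ C_c^∞(B_R), one has ∫_{B_R} |∇u| / d^{s−1} dx ≥ (s−1) · ∫_{B_R} |u| / d^s dx + Σ_{k=1}^{⌊s⌋−1} ((n−1)/R^k) · ∫_{B_R} |u| / d^{s−k} dx + ((γ−1)/R^{s−1}) · ∫_{B_R} (|u| / d) · X^γ(d/R) dx. -/
open MeasureTheory Metric Set

noncomputable def hX (R d : ℝ) : ℝ := (1 - Real.log (d / R))⁻¹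

noncomputable def hphi (R s γ d : ℝ) : ℝ := d ^ (1 - s) - R ^ (1 - s) * hX R d ^ (γ - 1)

noncomputable def hW (n : ℕ) (R s γ d : ℝ) : ℝ :=
  (s - 1) * (1 / d ^ s)
    + (∑ k ∈ Finset.Icc 1 (⌊s⌋₊ - 1), ((n : ℝ) - 1) / R ^ k * (1 / d ^ (s - (k : ℝ))))
    + ((γ - 1) / R ^ (s - 1)) * ((1 / d) * hX R d ^ γ)

lemma one_le_log_part {R d : ℝ} (hR : 0 < R) (hd : 0 < d) (hdR : d ≤ R) :
    1 ≤ 1 - Real.log (d / R) := by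
  have : Real.log (d / R) ≤ 0 :=
    Real.log_nonpos (by positivity) ((div_le_one hR).2 hdR)
  linarith

lemma hX_pos {R d : ℝ} (hR : 0 < R) (hd : 0 < d) (hdR : d ≤ R) : 0 < hX R d := by
  have := one_le_log_part hR hd hdR
  unfold hX; positivity

lemma hX_le {R d : ℝ} (hR : 0 < R) (hd : 0 < d) (hdR : d ≤ R) : hX R d ≤ 1 :=
  inv_le_one_of_one_le₀ (one_le_log_part hR hd hdR)

lemma hX_deriv {R d : ℝ} (hR : 0 < R) (hd : 0 < d) (hdR : d ≤ R) :
    HasDerivAt (hX R) (hX R d ^ 2 / d) d := by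
  have h1 := one_le_log_part hR hd hdR
  have h := ((((hasDerivAt_id d).div_const R).log (by simp; exact ⟨hd.ne', hR.ne'⟩)).const_sub 1).inv
    (by simp; linarith)
  refine HasDerivAt.congr_deriv h ?_
  simp only [id, hX]
  field_simp

lemma hphi_deriv {R s γ d : ℝ} (hR : 0 < R) (hd : 0 < d) (hdR : d ≤ R) :
    HasDerivAt (hphi R s γ)
      (-((s - 1) * (1 / d ^ s) + ((γ - 1) / R ^ (s - 1)) * ((1 / d) * hX R d ^ γ))) d := by
  have hx := hX_pos hR hd hdR
  have h := (Real.hasDerivAt_rpow_const (p := 1 - s) (Or.inl hd.ne')).sub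
    (((hX_deriv hR hd hdR).rpow_const (p := γ - 1) (Or.inl hx.ne')).const_mul (R ^ (1 - s)))
  refine HasDerivAt.congr_deriv h ?_
  have e1 : d ^ (1 - s - 1) = 1 / d ^ s := by
    rw [show 1 - s - 1 = -s by ring, Real.rpow_neg hd.le, one_div]
  have e2 : R ^ (1 - s) = 1 / R ^ (s - 1) := by
    rw [show 1 - s = -(s - 1) by ring, Real.rpow_neg hR.le, one_div]
  have e3 : hX R d ^ γ = hX R d ^ (γ - 1 - 1) * hX R d ^ 2 := by
    rw [← Real.rpow_natCast, ← Real.rpow_add hx]; congr 1; push_cast; ring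
  rw [e1, e2, e3]
  ring

lemma hphi_le {R s γ d : ℝ} (hR : 0 < R) (hd : 0 < d) (hdR : d ≤ R) :
    hphi R s γ d ≤ 1 / d ^ (s - 1) := by
  have hx := hX_pos hR hd hdR
  have : 0 ≤ R ^ (1 - s) * hX R d ^ (γ - 1) := by positivity
  have e2 : d ^ (1 - s) = 1 / d ^ (s - 1) := by
    rw [show 1 - s = -(s - 1) by ring, Real.rpow_neg hd.le, one_div]
  unfold hphi; linarith

lemma hphi_series {R s γ d : ℝ} (hR : 0 < R) (hd : 0 < d) (hdR : d ≤ R) (hγ : 1 < γ)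
    (m : ℕ) (hm : (m : ℝ) + 1 ≤ s) :
    (∑ k ∈ Finset.Icc 1 m, 1 / R ^ k * (1 / d ^ (s - (k : ℝ)))) * (R - d) ≤ hphi R s γ d := by
  have key : ∀ m : ℕ, (∑ k ∈ Finset.Icc 1 m, 1 / R ^ k * (1 / d ^ (s - (k : ℝ)))) * (R - d)
      = d ^ (1 - s) - d ^ ((m : ℝ) + 1 - s) * (1 / R ^ m) := by
    intro m
    induction m with
    | zero => simp
    | succ j ih =>
      rw [Finset.sum_Icc_succ_top (by omega), add_mul, ih]
      have e1 : 1 / d ^ (s - ((j + 1 : ℕ) : ℝ)) = d ^ ((j : ℝ) + 1 - s) := by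
        rw [one_div, ← Real.rpow_neg hd.le]; congr 1; push_cast; ring
      have e2 : d ^ (((j + 1 : ℕ) : ℝ) + 1 - s) = d ^ ((j : ℝ) + 1 - s) * d := by
        rw [← Real.rpow_add_one hd.ne']; congr 1; push_cast; ring
      rw [e1, e2, pow_succ]
      field_simp
      ring
  rw [key]
  unfold hphi
  have hx := hX_pos hR hd hdR
  have h1 : hX R d ^ (γ - 1) ≤ 1 :=
    Real.rpow_le_one hx.le (hX_le hR hd hdR) (by linarith)
  have h2 : R ^ ((m : ℝ) + 1 - s) ≤ d ^ ((m : ℝ) + 1 - s) :=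
    Real.rpow_le_rpow_of_nonpos hd hdR (by linarith)
  have h3 : R ^ (1 - s) = R ^ ((m : ℝ) + 1 - s) * (1 / R ^ m) := by
    rw [← Real.rpow_natCast, one_div, ← Real.rpow_neg hR.le, ← Real.rpow_add hR]
    congr 1; ring
  have h4 : 0 < R ^ (1 - s) := by positivity
  have h5 : R ^ ((m : ℝ) + 1 - s) * (1 / R ^ m) ≤ d ^ ((m : ℝ) + 1 - s) * (1 / R ^ m) := by
    gcongr
  nlinarith

lemma hphi_nonneg {R s γ d : ℝ} (hR : 0 < R) (hd : 0 < d) (hdR : d ≤ R) (hγ : 1 < γ)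
    (hs : 2 ≤ s) : 0 ≤ hphi R s γ d := by
  simpa using hphi_series hR hd hdR hγ 0 (by simp; linarith)

lemma hW_le {n : ℕ} (hn : 1 ≤ n) {R s γ r : ℝ} (hr : 0 < r) (hrR : r < R)
    (hγ : 1 < γ) (hs : 2 ≤ s) :
    hW n R s γ (R - r) ≤
      ((s - 1) * (1 / (R - r) ^ s) + ((γ - 1) / R ^ (s - 1)) * ((1 / (R - r)) * hX R (R - r) ^ γ))
      + ((n : ℝ) - 1) * hphi R s γ (R - r) / r := by
  have hR : 0 < R := hr.trans hrR
  have h1 : 1 ≤ ⌊s⌋₊ := Nat.le_floor (by simp; linarith)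
  have h := hphi_series (s := s) hR (sub_pos.2 hrR) (by linarith) hγ (⌊s⌋₊ - 1) (by
    rw [Nat.cast_sub h1]; simpa using Nat.floor_le (by linarith))
  have h2 : (∑ k ∈ Finset.Icc 1 (⌊s⌋₊ - 1), 1 / R ^ k * (1 / (R - r) ^ (s - (k : ℝ))))
      ≤ hphi R s γ (R - r) / r := by
    rw [le_div_iff₀ hr]; simpa using h
  have h3 : (0 : ℝ) ≤ (n : ℝ) - 1 := by
    have : (1 : ℝ) ≤ n := by exact_mod_cast hn
    linarith
  have h4 := mul_le_mul_of_nonneg_left h2 h3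
  rw [Finset.mul_sum, ← mul_div_assoc] at h4
  unfold hW
  have : ∀ k : ℕ, ((n : ℝ) - 1) / R ^ k * (1 / (R - r) ^ (s - (k : ℝ)))
      = ((n : ℝ) - 1) * (1 / R ^ k * (1 / (R - r) ^ (s - (k : ℝ)))) := fun k => by ring
  simp only [this]
  linarith

lemma right_deriv_abs {h : ℝ → ℝ} {h' x : ℝ} (hh : HasDerivAt h h' x) :
    ∃ D : ℝ, HasDerivWithinAt (fun y => |h y|) D (Ioi x) x ∧ |D| ≤ |h'| := by
  rcases lt_trichotomy (h x) 0 with h0 | h0 | h0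
  · exact ⟨-1 * h', ((hasDerivAt_abs_neg h0).comp x hh).hasDerivWithinAt, by simp⟩
  · refine ⟨|h'|, ?_, by simp⟩
    have h1 := hh.hasDerivWithinAt (s := Ioi x)
    rw [hasDerivWithinAt_iff_tendsto_slope' (by simp)] at h1 ⊢
    refine h1.abs.congr' ?_
    filter_upwards [self_mem_nhdsWithin] with y hy
    have : 0 < y - x := sub_pos.2 hy
    simp [slope_def_field, h0, abs_div, abs_of_pos this]
  · exact ⟨1 * h', ((hasDerivAt_abs_pos h0).comp x hh).hasDerivWithinAt, by simp⟩

lemma hX_cont {R : ℝ} (hR : 0 < R) : ContinuousOn (hX R) (Ioc 0 R) := fun d hd =>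
  (hX_deriv hR hd.1 hd.2).continuousAt.continuousWithinAt

lemma rpow_cont (R p : ℝ) : ContinuousOn (fun d : ℝ => d ^ p) (Ioc 0 R) := fun d hd =>
  (Real.continuousAt_rpow_const d p (Or.inl hd.1.ne')).continuousWithinAt

lemma rpow_inv_cont (R p : ℝ) : ContinuousOn (fun d : ℝ => 1 / d ^ p) (Ioc 0 R) :=
  continuousOn_const.div (rpow_cont R p) fun d hd => (Real.rpow_pos_of_pos hd.1 p).ne'

lemma last_cont {R γ : ℝ} (hR : 0 < R) :
    ContinuousOn (fun d => (1 / d) * hX R d ^ γ) (Ioc 0 R) := by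
  refine ContinuousOn.mul (continuousOn_const.div continuousOn_id fun d hd => hd.1.ne') ?_
  exact (hX_cont hR).rpow_const fun d hd => Or.inl (hX_pos hR hd.1 hd.2).ne'

lemma hW_cont {n : ℕ} {R s γ : ℝ} (hR : 0 < R) : ContinuousOn (hW n R s γ) (Ioc 0 R) := by
  unfold hW
  refine ((continuousOn_const.mul (rpow_inv_cont R s)).add ?_).add
    (continuousOn_const.mul (last_cont hR))
  exact continuousOn_finset_sum _ fun k _ => continuousOn_const.mul (rpow_inv_cont R _)

lemma one_dim {n : ℕ} (hn : 1 ≤ n) {R s γ ρ : ℝ} (hρ : 0 < ρ) (hρR : ρ < R)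
    (hγ : 1 < γ) (hs : 2 ≤ s) {h h' N : ℝ → ℝ} (hh : ∀ r, HasDerivAt h (h' r) r)
    (hN : ∀ r, |h' r| ≤ N r) (hNc : Continuous N) (h0 : ∀ r, ρ ≤ r → h r = 0)
    (N0 : ∀ r, ρ ≤ r → N r = 0) :
    0 ≤ ∫ r in Ioi (0 : ℝ), r ^ (n - 1) * (N r * (1 / (R - r) ^ (s - 1)) - |h r| * hW n R s γ (R - r)) := by
  have hR : 0 < R := hρ.trans hρR
  have hhc : Continuous h := continuous_iff_continuousAt.2 fun r => (hh r).continuousAt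
  set F : ℝ → ℝ := fun r => r ^ (n - 1) *
    (N r * (1 / (R - r) ^ (s - 1)) - |h r| * hW n R s γ (R - r)) with hF
  have hmaps : MapsTo (fun r : ℝ => R - r) (Icc 0 ρ) (Ioc 0 R) := fun r hr =>
    ⟨by linarith [hr.2], by linarith [hr.1]⟩
  have hsub : ContinuousOn (fun r : ℝ => R - r) (Icc 0 ρ) := by fun_prop
  have hFc : ContinuousOn F (Icc 0 ρ) := by
    refine (by fun_prop : ContinuousOn (fun r : ℝ => r ^ (n - 1)) (Icc 0 ρ)).mul ?_
    refine (hNc.continuousOn.mul ((rpow_inv_cont R (s - 1)).comp hsub hmaps)).sub ?_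
    exact hhc.abs.continuousOn.mul ((hW_cont hR).comp hsub hmaps)
  have hpc : ContinuousOn (hphi R s γ) (Ioc 0 R) := fun d hd =>
    (hphi_deriv hR hd.1 hd.2).continuousAt.continuousWithinAt
  have e : ∫ r in Ioi (0 : ℝ), F r = ∫ r in (0 : ℝ)..ρ, F r := by
    rw [intervalIntegral.integral_of_le hρ.le]
    refine (setIntegral_eq_of_subset_of_forall_diff_eq_zero measurableSet_Ioi
      (fun x hx => hx.1) ?_)
    intro x hx
    have : ρ ≤ x := by
      by_contra hc
      exact hx.2 ⟨hx.1, (not_le.1 hc).le⟩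
    simp [hF, h0 x this, N0 x this]
  rw [e]
  set g : ℝ → ℝ := fun r => -(|h r| * (hphi R s γ (R - r) * r ^ (n - 1))) with hg
  have hgc : ContinuousOn g (Icc 0 ρ) :=
    (hhc.abs.continuousOn.mul ((hpc.comp hsub hmaps).mul (by fun_prop))).neg
  choose D hD hD' using fun r => right_deriv_abs (hh r)
  have hphiR : hphi R s γ R = 0 := by
    simp [hphi, hX, div_self hR.ne']
  have := intervalIntegral.sub_le_integral_of_hasDeriv_right_of_le (g := g) (φ := F)
    (g' := fun r => -(D r * (hphi R s γ (R - r) * r ^ (n - 1)) + |h r| *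
      ((((s - 1) * (1 / (R - r) ^ s) + ((γ - 1) / R ^ (s - 1)) * ((1 / (R - r)) * hX R (R - r) ^ γ)))
        * r ^ (n - 1) + hphi R s γ (R - r) * (((n - 1 : ℕ) : ℝ) * r ^ (n - 1 - 1))))) hρ.le hgc
    ?_ (hFc.integrableOn_Icc) ?_
  · simpa [hg, hphiR, h0 ρ le_rfl] using this
  · intro r hr
    have hd := (hphi_deriv (s := s) (γ := γ) (d := R - r) hR (by linarith [hr.2]) (by linarith [hr.1]))
    have h1 : HasDerivAt (fun r => hphi R s γ (R - r)) _ r :=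
      hd.comp r ((hasDerivAt_id r).const_sub R)
    have h2 := (hD r).mul (h1.mul (hasDerivAt_pow (n - 1) r)).hasDerivWithinAt
    refine h2.neg.congr_deriv ?_
    simp only [Pi.mul_apply]
    ring
  · intro r hr
    have hr0 := hr.1
    have hrR : r < R := hr.2.trans hρR
    have hd : 0 < R - r := sub_pos.2 hrR
    have hdR : R - r ≤ R := by linarith
    have hw := hW_le hn hr0 hrR hγ hs
    have p0 := hphi_nonneg hR hd hdR hγ hs
    have p1 := hphi_le (s := s) (γ := γ) hR hd hdR
    have ed : ((n - 1 : ℕ) : ℝ) * r ^ (n - 1 - 1) = ((n : ℝ) - 1) * r ^ (n - 1) / r := by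
      obtain ⟨m, rfl⟩ : ∃ m, n = m + 1 := ⟨n - 1, by omega⟩
      rcases m with _ | j
      · simp
      · simp [pow_succ]; field_simp
    have hP : 0 < r ^ (n - 1) := by positivity
    have hNr : 0 ≤ N r := (abs_nonneg _).trans (hN r)
    have q1 : -(D r * hphi R s γ (R - r)) ≤ N r * (1 / (R - r) ^ (s - 1)) := by
      calc -(D r * hphi R s γ (R - r)) = (-D r) * hphi R s γ (R - r) := by ring
        _ ≤ N r * hphi R s γ (R - r) :=
          mul_le_mul_of_nonneg_right ((neg_le_abs _).trans ((hD' r).trans (hN r))) p0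
        _ ≤ _ := mul_le_mul_of_nonneg_left p1 hNr
    have q2 := mul_le_mul_of_nonneg_left hw (abs_nonneg (h r))
    have q3 := mul_le_mul_of_nonneg_left (sub_le_sub q1 q2) hP.le
    simp only [hF]
    refine le_trans (le_of_eq ?_) q3
    rw [ed]
    ring

lemma polar_nonneg {E : Type*} [NormedAddCommGroup E] [NormedSpace ℝ E] [MeasurableSpace E]
    [BorelSpace E] [FiniteDimensional ℝ E] [Nontrivial E] (μ : Measure E) [μ.IsAddHaarMeasure]
    (G : E → ℝ)
    (hG : ∀ ω : E, ‖ω‖ = 1 →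
      0 ≤ ∫ r in Ioi (0 : ℝ), r ^ (Module.finrank ℝ E - 1) * G (r • ω)) :
    0 ≤ ∫ x, G x ∂μ := by
  have e1 : ∫ x, G x ∂μ = ∫ x : ({(0)}ᶜ : Set E), G x.1 ∂(μ.comap (↑)) := by
    rw [integral_subtype_comap (measurableSet_singleton _).compl fun x ↦ G x,
        restrict_compl_singleton]
  have e2 : ∫ x : ({(0)}ᶜ : Set E), G x.1 ∂(μ.comap (↑)) =
      ∫ x, G (x.2.1 • x.1.1) ∂μ.toSphere.prod (.volumeIoiPow (Module.finrank ℝ E - 1)) := by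
    rw [← μ.measurePreserving_homeomorphUnitSphereProd.integral_comp
        (Homeomorph.measurableEmbedding _)]
    refine integral_congr_ae (Filter.Eventually.of_forall fun x => ?_)
    have hx : ‖x.1‖ ≠ 0 := norm_ne_zero_iff.2 x.2
    simp [smul_smul, hx]
  rw [e1, e2]
  by_cases hi : Integrable (fun x : sphere (0 : E) 1 × Ioi (0 : ℝ) => G (x.2.1 • x.1.1))
      (μ.toSphere.prod (.volumeIoiPow (Module.finrank ℝ E - 1)))
  swap
  · rw [integral_undef hi]
  rw [integral_prod _ hi]
  refine integral_nonneg fun ω => ?_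
  have := hG ω.1 (by simpa using ω.2)
  simp only [Measure.volumeIoiPow, ENNReal.ofReal, Pi.zero_apply]
  rw [integral_withDensity_eq_integral_smul,
    integral_subtype_comap measurableSet_Ioi
      fun a ↦ Real.toNNReal (a ^ (Module.finrank ℝ E - 1)) • G (a • ω.1),
    setIntegral_congr_fun measurableSet_Ioi fun x hx ↦ ?_]
  · exact this
  · show _ = _
    rw [NNReal.smul_def, Real.coe_toNNReal _ (pow_nonneg (le_of_lt hx) _), smul_eq_mul]
  · exact (measurable_subtype_coe.pow_const _).real_toNNReal

lemma integ_aux {n : ℕ} {R : ℝ} {f : EuclideanSpace ℝ (Fin n) → ℝ} (hf : Continuous f)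
    (hc : HasCompactSupport f) (hs : tsupport f ⊆ ball 0 R) {w : ℝ → ℝ}
    (hw : ContinuousOn w (Ioc 0 R)) :
    IntegrableOn (fun x => f x * w (R - ‖x‖)) (ball 0 R) := by
  refine Integrable.integrableOn ?_
  rw [← integrableOn_iff_integrable_of_support_subset (s := tsupport f)]
  · refine ContinuousOn.integrableOn_compact hc (hf.continuousOn.mul ?_)
    refine hw.comp (by fun_prop) fun x hx => ?_
    have := hs hx
    rw [mem_ball_zero_iff] at this
    exact ⟨by linarith, by linarith [norm_nonneg x]⟩
  · intro x hx
    apply subset_tsupport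
    intro h0
    exact hx (by simp [h0])

/-- `L^1` weighted Hardy inequality on a ball with a finite series of
optimal remainder terms and a final logarithmic remainder. -/
theorem l1_weighted_hardy_ball_series (n : ℕ) (hn : 1 ≤ n) (R : ℝ) (hR : 0 < R)
    (s γ : ℝ) (hs : 2 ≤ s) (hγ : 1 < γ) :
    ∀ u : EuclideanSpace ℝ (Fin n) → ℝ, ContDiff ℝ (⊤ : ℕ∞) u → HasCompactSupport u →
      tsupport u ⊆ Metric.ball (0 : EuclideanSpace ℝ (Fin n)) R →
      (∫ x in Metric.ball (0 : EuclideanSpace ℝ (Fin n)) R,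
          ‖fderiv ℝ u x‖ / (R - ‖x‖) ^ (s - 1)) ≥
        (s - 1) * (∫ x in Metric.ball (0 : EuclideanSpace ℝ (Fin n)) R,
            |u x| / (R - ‖x‖) ^ s)
        + (∑ k ∈ Finset.Icc 1 (⌊s⌋₊ - 1),
            ((n : ℝ) - 1) / R ^ k *
              ∫ x in Metric.ball (0 : EuclideanSpace ℝ (Fin n)) R,
                |u x| / (R - ‖x‖) ^ (s - (k : ℝ)))
        + ((γ - 1) / R ^ (s - 1)) *
            ∫ x in Metric.ball (0 : EuclideanSpace ℝ (Fin n)) R,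
              (|u x| / (R - ‖x‖)) * ((1 - Real.log ((R - ‖x‖) / R))⁻¹) ^ γ := by
  intro u hu hc hsupp
  have hne : Nonempty (Fin n) := ⟨⟨0, hn⟩⟩
  have hnt : Nontrivial (EuclideanSpace ℝ (Fin n)) :=
    Module.nontrivial_of_finrank_pos (R := ℝ) (by simp; omega)
  obtain ⟨ρ, hρ, hsρ⟩ := exists_pos_lt_subset_ball hR (isClosed_tsupport u) hsupp
  have u0 : ∀ x, ρ ≤ ‖x‖ → u x = 0 := fun x hx =>
    image_eq_zero_of_notMem_tsupport fun h => by
      have := hsρ h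
      rw [mem_ball_zero_iff] at this
      linarith
  have f0 : ∀ x, ρ ≤ ‖x‖ → fderiv ℝ u x = 0 := fun x hx => by
    by_contra h
    have := hsρ (support_fderiv_subset ℝ h)
    rw [mem_ball_zero_iff] at this
    linarith
  have hdc : Continuous (fun x => ‖fderiv ℝ u x‖) :=
    (hu.continuous_fderiv (by simp)).norm
  have hdiff : Differentiable ℝ u := hu.differentiable (by simp)
  have ha : Continuous (fun x => |u x|) := hu.continuous.abs
  have hac : HasCompactSupport (fun x => |u x|) := hc.comp_left (g := fun t : ℝ => |t|) abs_zero
  have hasub : tsupport (fun x => |u x|) ⊆ ball 0 R :=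
    (closure_mono (by intro x hx h0; exact hx (by simp [h0]))).trans hsupp
  have hNc : HasCompactSupport (fun x => ‖fderiv ℝ u x‖) := (hc.fderiv ℝ).norm
  have hNsub : tsupport (fun x => ‖fderiv ℝ u x‖) ⊆ ball 0 R :=
    ((closure_mono (by intro x hx h0; exact hx (by simp [h0]))).trans
      (tsupport_fderiv_subset ℝ)).trans hsupp
  have I1 := integ_aux hdc hNc hNsub (rpow_inv_cont R (s - 1))
  have I2 := integ_aux ha hac hasub (rpow_inv_cont R s)
  have I3 := fun k : ℕ => integ_aux ha hac hasub (rpow_inv_cont R (s - (k : ℝ)))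
  have I4 := integ_aux ha hac hasub (last_cont (γ := γ) hR)
  have IW := integ_aux ha hac hasub (hW_cont (n := n) (s := s) (γ := γ) hR)
  have main : 0 ≤ ∫ x : EuclideanSpace ℝ (Fin n), (‖fderiv ℝ u x‖ * (1 / (R - ‖x‖) ^ (s - 1))
      - |u x| * hW n R s γ (R - ‖x‖)) := by
    refine polar_nonneg volume _ fun ω hω => ?_
    have hnorm : ∀ r : ℝ, 0 ≤ r → ‖r • ω‖ = r := fun r hr => by
      rw [norm_smul, hω, Real.norm_of_nonneg hr, mul_one]
    have := one_dim hn hρ.1 hρ.2 hγ hs (h := fun r => u (r • ω))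
      (h' := fun r => fderiv ℝ u (r • ω) ω) (N := fun r => ‖fderiv ℝ u (r • ω)‖) ?_ ?_ ?_ ?_ ?_
    · rw [finrank_euclideanSpace_fin]
      refine this.trans_eq (setIntegral_congr_fun measurableSet_Ioi fun r hr => ?_)
      simp only [hnorm r (le_of_lt hr)]
    · intro r
      have h1 : HasDerivAt (fun r : ℝ => r • ω) ω r := by
        simpa using (hasDerivAt_id r).smul_const ω
      exact (hdiff (r • ω)).hasFDerivAt.comp_hasDerivAt r h1
    · intro r
      have := (fderiv ℝ u (r • ω)).le_opNorm ω
      simpa [hω] using this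
    · exact hdc.comp (by fun_prop)
    · exact fun r hr => u0 _ (by rw [hnorm r (hρ.1.le.trans hr)]; exact hr)
    · exact fun r hr => by
        have := f0 (r • ω) (by rw [hnorm r (hρ.1.le.trans hr)]; exact hr)
        simp [this]
  rw [← setIntegral_eq_integral_of_forall_compl_eq_zero (s := ball 0 R), integral_sub I1 IW] at main
  swap
  · intro x hx
    have : ρ ≤ ‖x‖ := by
      rw [mem_ball_zero_iff] at hx
      linarith [hρ.2]
    simp [u0 x this, f0 x this]
  have split : ∫ x in ball (0 : EuclideanSpace ℝ (Fin n)) R, |u x| * hW n R s γ (R - ‖x‖) =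
      (s - 1) * (∫ x in ball (0 : EuclideanSpace ℝ (Fin n)) R, |u x| * (1 / (R - ‖x‖) ^ s))
      + (∑ k ∈ Finset.Icc 1 (⌊s⌋₊ - 1), ((n : ℝ) - 1) / R ^ k *
          ∫ x in ball (0 : EuclideanSpace ℝ (Fin n)) R, |u x| * (1 / (R - ‖x‖) ^ (s - (k : ℝ))))
      + ((γ - 1) / R ^ (s - 1)) * ∫ x in ball (0 : EuclideanSpace ℝ (Fin n)) R,
          |u x| * (1 / (R - ‖x‖) * hX R (R - ‖x‖) ^ γ) := by
    simp only [← integral_const_mul]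
    rw [← integral_finset_sum _ fun k _ => (I3 k).const_mul _, ← integral_add, ← integral_add]
    · congr 1
      ext x
      simp only [hW, mul_add, Finset.mul_sum]
      congr 1
      · congr 1
        · ring
        · exact Finset.sum_congr rfl fun k _ => by ring
      · ring
    · exact (I2.const_mul _).add (integrable_finset_sum _ fun k _ => (I3 k).const_mul _)
    · exact I4.const_mul _
    · exact I2.const_mul _
    · exact integrable_finset_sum _ fun k _ => (I3 k).const_mul _
  rw [split] at main
  have e4 : ∀ x : EuclideanSpace ℝ (Fin n), |u x| * (1 / (R - ‖x‖) * hX R (R - ‖x‖) ^ γ) =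
      (|u x| / (R - ‖x‖)) * ((1 - Real.log ((R - ‖x‖) / R))⁻¹) ^ γ := fun x => by
    unfold hX; ring
  simp only [e4, mul_one_div] at main
  linarith
end
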